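/- arXiv:2009.00843 — 3 statements merged into one kernel-verified Lean document; each statement's English description precedes it below -/
import Mathlib

section
/- Every fullerene graph has girth 5. -/
/-- A combinatorial description of a fullerene: a connected cubic plane graph
all of whose faces have size `5` or `6`. A plane embedding is recorded by its
collection `F` of faces, each face given as the edge set of a cycle of `G`;
every edge lies on exactly two faces, and Euler's formula holds. -/
structure IsFullerene {V : Type*} [Fintype V] [DecidableEq V]
    (G : SimpleGraph V) [DecidableRel G.Adj] (F : Finset (Finset (Sym2 V))) : Prop where
  connected : G.Connected
  cubic : ∀ v : V, G.degree v = 3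
  face_cycle : ∀ f ∈ F, ∃ (v : V) (w : G.Walk v v), w.IsCycle ∧ w.edges.toFinset = f
  face_size : ∀ f ∈ F, f.card = 5 ∨ f.card = 6
  edge_faces : ∀ e ∈ G.edgeFinset, (F.filter (fun f => e ∈ f)).card = 2
  euler : (Fintype.card V : ℤ) - G.edgeFinset.card + F.card = 2


open SimpleGraph

set_option linter.unusedSectionVars false

namespace Fullerene

/-- Exactness from a dimension count. -/
lemma exact_of_card {K V E F : Type*} [Field K] [Fintype V] [Fintype E] [Fintype F]
    [DecidableEq V] [DecidableEq E] [DecidableEq F]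
    (A : Matrix V E K) (B : Matrix E F K) (hAB : A * B = 0)
    (hA : Module.finrank K (LinearMap.ker A.transpose.mulVecLin) ≤ 1)
    (hB : Module.finrank K (LinearMap.ker B.mulVecLin) ≤ 1)
    (h : Fintype.card V + Fintype.card F = Fintype.card E + 2)
    (c : E → K) (hc : A.mulVec c = 0) : ∃ s, B.mulVec s = c := by
  have h1 := LinearMap.finrank_range_add_finrank_ker A.transpose.mulVecLin
  have h2 := LinearMap.finrank_range_add_finrank_ker B.mulVecLin
  have h3 := LinearMap.finrank_range_add_finrank_ker A.mulVecLin
  have h4 := Matrix.rank_transpose A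
  simp only [Matrix.rank] at h4
  simp only [Module.finrank_fintype_fun_eq_card] at h1 h2 h3
  have hle : LinearMap.range B.mulVecLin ≤ LinearMap.ker A.mulVecLin := by
    rintro _ ⟨x, rfl⟩
    simp [Matrix.mulVec_mulVec, hAB]
  have heq := Submodule.eq_of_le_of_finrank_le hle (by omega)
  have : c ∈ LinearMap.range B.mulVecLin := by
    rw [heq]; simpa using hc
  obtain ⟨s, hs⟩ := this
  exact ⟨s, by simpa using hs⟩

/-- a space of functions all of which are constant has dimension at most one -/
lemma finrank_le_one_of_const {K X : Type*} [Field K] [Fintype X]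
    (W : Submodule K (X → K)) (h : ∀ w ∈ W, ∀ x y, w x = w y) :
    Module.finrank K W ≤ 1 := by
  have hle : W ≤ Submodule.span K {fun _ => (1 : K)} := by
    intro w hw
    rw [Submodule.mem_span_singleton]
    by_cases hX : Nonempty X
    · obtain ⟨x⟩ := hX
      exact ⟨w x, by ext y; simp [h w hw x y]⟩
    · exact ⟨0, by ext y; exact (hX ⟨y⟩).elim⟩
  refine (Submodule.finrank_mono hle).trans ?_
  simpa using finrank_span_le_card (R := K) ({fun _ => (1 : K)} : Set (X → K))

variable {V : Type*} [Fintype V] [DecidableEq V]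
    {G : SimpleGraph V} [DecidableRel G.Adj] {F : Finset (Finset (Sym2 V))}

lemma face_adj (hG : IsFullerene G F) {f} (hf : f ∈ F) {a b : V} (h : s(a,b) ∈ f) :
    G.Adj a b := by
  obtain ⟨v, w, hw, rfl⟩ := hG.face_cycle f hf
  exact w.adj_of_mem_edges (by simpa using h)

lemma face_two (hG : IsFullerene G F) {f} (hf : f ∈ F) {v a : V} (h : s(v,a) ∈ f) :
    ∃ b, b ≠ a ∧ s(v,b) ∈ f ∧ ∀ c, s(v,c) ∈ f → c = a ∨ c = b := by
  obtain ⟨x, w, hw, rfl⟩ := hG.face_cycle f hf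
  simp only [List.mem_toFinset] at h ⊢
  have h2 := hw.ncard_neighborSet_toSubgraph_eq_two (w.fst_mem_support_of_mem_edges h)
  obtain ⟨p, q, hpq, hs⟩ := Set.ncard_eq_two.1 h2
  have key : ∀ c, s(v,c) ∈ w.edges ↔ c = p ∨ c = q := by
    intro c
    rw [← Walk.adj_toSubgraph_iff_mem_edges, ← Subgraph.mem_neighborSet, hs]; simp
  rcases (key a).1 h with rfl | rfl
  · exact ⟨q, hpq.symm, (key q).2 (by simp), fun c hc => (key c).1 hc⟩
  · exact ⟨p, hpq, (key p).2 (by simp), fun c hc => ((key c).1 hc).symm⟩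

lemma face_uniq (hG : IsFullerene G F) {f} (hf : f ∈ F) {v a b c : V} (ha : s(v,a) ∈ f)
    (hb : s(v,b) ∈ f) (hab : a ≠ b) (hc : s(v,c) ∈ f) : c = a ∨ c = b := by
  obtain ⟨d, h1, h2, h3⟩ := face_two hG hf ha
  have := h3 b hb; have := h3 c hc
  grind

lemma walk_closed (U : Set V) {x y : V} (w : G.Walk x y)
    (h : ∀ a b, s(a,b) ∈ w.edges → a ∈ U → b ∈ U) :
    ∀ v ∈ w.support, v ∈ U → ∀ z ∈ w.support, z ∈ U := by
  have hx : ∀ v ∈ w.support, v ∈ U ↔ x ∈ U := by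
    induction w with
    | nil => simp
    | @cons a b c hab p ih =>
      have ih' := ih (fun a b he => h a b (by simp [he]))
      have e1 := h a b (by simp)
      have e2 := h b a (by simp [Sym2.eq_swap])
      intro v hv
      simp only [Walk.support_cons, List.mem_cons] at hv
      rcases hv with rfl | hv
      · rfl
      · rw [ih' v hv]; exact ⟨e2, e1⟩
  intro v hv hvU z hz
  rw [hx z hz, ← hx v hv]; exact hvU

lemma face_closed (hG : IsFullerene G F) {f} (hf : f ∈ F) (U : Set V)
    (h : ∀ a b, s(a,b) ∈ f → a ∈ U → b ∈ U) {v a : V} (hva : s(v,a) ∈ f) (hv : v ∈ U)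
    {x y : V} (hxy : s(x,y) ∈ f) : x ∈ U := by
  obtain ⟨z, w, hw, rfl⟩ := hG.face_cycle f hf
  simp only [List.mem_toFinset] at h hva hxy
  exact walk_closed U w h v (w.fst_mem_support_of_mem_edges hva) hv x
    (w.fst_mem_support_of_mem_edges hxy)

lemma third (hG : IsFullerene G F) {v a b : V} (ha : G.Adj v a) (hb : G.Adj v b) (hab : a ≠ b) :
    ∃ c, G.Adj v c ∧ c ≠ a ∧ c ≠ b ∧ ∀ d, G.Adj v d → d = a ∨ d = b ∨ d = c := by
  have h := hG.cubic v
  rw [← card_neighborFinset_eq_degree, Finset.card_eq_three] at h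
  obtain ⟨p, q, r, h1, h2, h3, h4⟩ := h
  have key : ∀ c, G.Adj v c ↔ c = p ∨ c = q ∨ c = r := by
    intro c; rw [← mem_neighborFinset, h4]; simp
  simp only [key] at ha hb ⊢
  by_cases h5 : p = a ∨ p = b
  · by_cases h6 : q = a ∨ q = b
    · exact ⟨r, by grind⟩
    · exact ⟨q, by grind⟩
  · exact ⟨p, by grind⟩

lemma corner (hG : IsFullerene G F) {v a b : V} (ha : G.Adj v a) (hb : G.Adj v b) (hab : a ≠ b) :
    ∃ f ∈ F, s(v,a) ∈ f ∧ s(v,b) ∈ f ∧ ∀ g ∈ F, s(v,a) ∈ g → s(v,b) ∈ g → g = f := by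
  obtain ⟨c, hc, hca, hcb, hall⟩ := third hG ha hb hab
  have key : ∀ x y z : V, G.Adj v x → x ≠ y → x ≠ z → y ≠ z →
      (∀ d, G.Adj v d → d = x ∨ d = y ∨ d = z) →
      (F.filter (fun f => s(v,x) ∈ f ∧ s(v,y) ∈ f)).card +
      (F.filter (fun f => s(v,x) ∈ f ∧ s(v,z) ∈ f)).card = 2 := by
    intro x y z hx hxy hxz hyz hd
    rw [← hG.edge_faces s(v,x) (by simpa using hx), ← Finset.card_union_of_disjoint]
    · congr 1
      ext f
      simp only [Finset.mem_union, Finset.mem_filter]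
      constructor
      · tauto
      · rintro ⟨hf, h⟩
        obtain ⟨b, h1, h2, h3⟩ := face_two hG hf h
        have := hd b (face_adj hG hf h2)
        grind
    · rw [Finset.disjoint_left]
      intro f h1 h2
      simp only [Finset.mem_filter] at h1 h2
      have := face_uniq hG h1.1 h1.2.1 h1.2.2 hxy h2.2.2
      grind
  have k1 := key a b c ha hab hca.symm hcb.symm hall
  have k2 := key b a c hb hab.symm hcb.symm hca.symm (by grind)
  have k3 := key c a b hc hca hcb hab (by grind)
  have e1 : (F.filter (fun f => s(v,a) ∈ f ∧ s(v,b) ∈ f)).card = 1 := by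
    simp only [and_comm (a := s(v,b) ∈ _) (b := s(v,a) ∈ _),
      and_comm (a := s(v,c) ∈ _) (b := s(v,a) ∈ _),
      and_comm (a := s(v,c) ∈ _) (b := s(v,b) ∈ _)] at k1 k2 k3
    omega
  obtain ⟨f, hf⟩ := Finset.card_eq_one.1 e1
  have m : ∀ g, g ∈ F ∧ s(v,a) ∈ g ∧ s(v,b) ∈ g ↔ g = f := by
    intro g
    have := congrArg (g ∈ ·) hf
    simpa using this
  have := (m f).2 rfl
  exact ⟨f, this.1, this.2.1, this.2.2, fun g h1 h2 h3 => (m g).1 ⟨h1, h2, h3⟩⟩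

lemma corner_uniq (hG : IsFullerene G F) {v a b : V} {f g} (hf : f ∈ F) (hg : g ∈ F) (hab : a ≠ b)
    (h1 : s(v,a) ∈ f) (h2 : s(v,b) ∈ f) (h3 : s(v,a) ∈ g) (h4 : s(v,b) ∈ g) : f = g := by
  obtain ⟨k, -, -, -, hk⟩ := corner hG (face_adj hG hf h1) (face_adj hG hf h2) hab
  rw [hk f hf h1 h2, hk g hg h3 h4]

/-- at an edge, there are exactly two faces -/
lemma edge_two (hG : IsFullerene G F) {e : Sym2 V} (he : e ∈ G.edgeSet) :
    ∃ f g, f ≠ g ∧ F.filter (fun f => e ∈ f) = {f, g} := by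
  have := hG.edge_faces e (by simpa using he)
  exact Finset.card_eq_two.1 this

lemma no_tri_face (hG : IsFullerene G F) {f} (hf : f ∈ F) {a b c : V}
    (hab : s(a,b) ∈ f) (hbc : s(b,c) ∈ f) (hca : s(c,a) ∈ f) : False := by
  have nab := (face_adj hG hf hab).ne
  have nbc := (face_adj hG hf hbc).ne
  have nca := (face_adj hG hf hca).ne
  have ea : ∀ y, s(a,y) ∈ f → y = b ∨ y = c := fun y hy =>
    face_uniq hG hf hab (Sym2.eq_swap ▸ hca) nbc hy
  have eb : ∀ y, s(b,y) ∈ f → y = c ∨ y = a := fun y hy =>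
    face_uniq hG hf hbc (Sym2.eq_swap ▸ hab) nca hy
  have ec : ∀ y, s(c,y) ∈ f → y = a ∨ y = b := fun y hy =>
    face_uniq hG hf hca (Sym2.eq_swap ▸ hbc) nab hy
  have cl : ∀ x y, s(x,y) ∈ f → x ∈ ({a, b, c} : Set V) := fun x y hxy =>
    face_closed hG hf {a, b, c} (by simp only [Set.mem_insert_iff, Set.mem_singleton_iff]; grind)
      hab (by simp) hxy
  have hsub : f ⊆ {s(a,b), s(b,c), s(c,a)} := by
    intro e
    induction e with | _ x y
    intro hxy
    have := cl x y hxy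
    simp only [Set.mem_insert_iff, Set.mem_singleton_iff, Finset.mem_insert,
      Finset.mem_singleton, Sym2.eq_iff] at this ⊢
    grind
  have h1 := Finset.card_le_card hsub
  have h2 := Finset.card_le_three (a := s(a,b)) (b := s(b,c)) (c := s(c,a))
  have := hG.face_size f hf
  omega

lemma no_quad_face (hG : IsFullerene G F) {f} (hf : f ∈ F) {a b c d : V}
    (hab : s(a,b) ∈ f) (hbc : s(b,c) ∈ f) (hcd : s(c,d) ∈ f) (hda : s(d,a) ∈ f)
    (hac : a ≠ c) (hbd : b ≠ d) : False := by
  have ea : ∀ y, s(a,y) ∈ f → y = b ∨ y = d := fun y hy =>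
    face_uniq hG hf hab (Sym2.eq_swap ▸ hda) hbd hy
  have eb : ∀ y, s(b,y) ∈ f → y = c ∨ y = a := fun y hy =>
    face_uniq hG hf hbc (Sym2.eq_swap ▸ hab) hac.symm hy
  have ec : ∀ y, s(c,y) ∈ f → y = d ∨ y = b := fun y hy =>
    face_uniq hG hf hcd (Sym2.eq_swap ▸ hbc) hbd.symm hy
  have ed : ∀ y, s(d,y) ∈ f → y = a ∨ y = c := fun y hy =>
    face_uniq hG hf hda (Sym2.eq_swap ▸ hcd) hac hy
  have cl : ∀ x y, s(x,y) ∈ f → x ∈ ({a, b, c, d} : Set V) := fun x y hxy =>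
    face_closed hG hf {a, b, c, d}
      (by simp only [Set.mem_insert_iff, Set.mem_singleton_iff]; grind)
      hab (by simp) hxy
  have hsub : f ⊆ {s(a,b), s(b,c), s(c,d), s(d,a)} := by
    intro e
    induction e with | _ x y
    intro hxy
    have := cl x y hxy
    simp only [Set.mem_insert_iff, Set.mem_singleton_iff, Finset.mem_insert,
      Finset.mem_singleton, Sym2.eq_iff] at this ⊢
    grind
  have h1 := Finset.card_le_card hsub
  have h2 := Finset.card_le_four (a := s(a,b)) (b := s(b,c)) (c := s(c,d)) (d := s(d,a))
  have := hG.face_size f hf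
  omega

lemma face_sub (hG : IsFullerene G F) {f} (hf : f ∈ F) : f ⊆ G.edgeFinset := by
  intro e
  induction e with | _ x y
  intro h
  simpa using face_adj hG hf h

lemma face_even (hG : IsFullerene G F) {f} (hf : f ∈ F) (v : V) :
    Even (f.filter (fun e => v ∈ e)).card := by
  by_cases h : ∃ a, s(v,a) ∈ f
  · obtain ⟨a, ha⟩ := h
    obtain ⟨b, hb, hb', hall⟩ := face_two hG hf ha
    have : f.filter (fun e => v ∈ e) = {s(v,a), s(v,b)} := by
      ext e
      simp only [Finset.mem_filter, Finset.mem_insert, Finset.mem_singleton]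
      constructor
      · rintro ⟨he, hv⟩
        obtain ⟨c, rfl⟩ := hv
        rcases hall c he with rfl | rfl <;> simp
      · rintro (rfl | rfl) <;> simp [*]
    rw [this, Finset.card_pair (by simp; grind)]
    decide
  · have : f.filter (fun e => v ∈ e) = ∅ := by
      ext e
      simp only [Finset.mem_filter, Finset.notMem_empty, iff_false, not_and]
      rintro he ⟨c, rfl⟩
      exact h ⟨c, he⟩
    simp [this]

/-- vertex-edge incidence matrix mod 2 -/
def matA (G : SimpleGraph V) [DecidableRel G.Adj] : Matrix V G.edgeFinset (ZMod 2) :=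
  fun v e => if v ∈ e.1 then 1 else 0

/-- edge-face incidence matrix mod 2 -/
def matB (G : SimpleGraph V) [DecidableRel G.Adj] (F : Finset (Finset (Sym2 V))) :
    Matrix G.edgeFinset F (ZMod 2) :=
  fun e f => if e.1 ∈ f.1 then 1 else 0

lemma sum_inc (C : Finset (Sym2 V)) (hC : C ⊆ G.edgeFinset) (v : V) :
    ∑ e : G.edgeFinset, matA G v e * (if e.1 ∈ C then 1 else 0) =
      (((C.filter (fun e => v ∈ e)).card : ℕ) : ZMod 2) := by
  simp only [matA]
  rw [Finset.sum_coe_sort G.edgeFinset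
    (fun e => (if v ∈ e then (1 : ZMod 2) else 0) * (if e ∈ C then 1 else 0))]
  simp only [mul_ite, mul_one, mul_zero]
  rw [← Finset.sum_filter, Finset.filter_mem_eq_inter, Finset.inter_eq_right.2 hC,
    ← Finset.sum_filter]
  simp

lemma sum_face (t : Finset (Sym2 V) → ZMod 2) {e : Sym2 V} (he : e ∈ G.edgeFinset) :
    (matB G F).mulVec (fun f => t f.1) ⟨e, he⟩ = ∑ f ∈ F.filter (fun f => e ∈ f), t f := by
  simp only [Matrix.mulVec, dotProduct, matB]
  rw [Finset.sum_coe_sort F (fun f => (if e ∈ f then (1 : ZMod 2) else 0) * t f)]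
  simp [Finset.sum_filter]

lemma sum_face_two (hG : IsFullerene G F) (t : Finset (Sym2 V) → ZMod 2) {e : Sym2 V}
    (he : e ∈ G.edgeFinset) {f g} (hf : f ∈ F) (hg : g ∈ F) (hfg : f ≠ g) (h1 : e ∈ f)
    (h2 : e ∈ g) :
    (matB G F).mulVec (fun f => t f.1) ⟨e, he⟩ = t f + t g := by
  rw [sum_face, ← Finset.sum_pair hfg]
  congr 1
  symm
  apply Finset.eq_of_subset_of_card_le
  · intro x; simp only [Finset.mem_insert, Finset.mem_singleton, Finset.mem_filter]
    rintro (rfl | rfl) <;> simp [*]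
  · rw [hG.edge_faces e he, Finset.card_pair hfg]

lemma eq_of_add_zmod {x y : ZMod 2} (h : x + y = 0) : x = y := by
  revert x y; decide

lemma ker_B (hG : IsFullerene G F) (t : Finset (Sym2 V) → ZMod 2)
    (ht : (matB G F).mulVec (fun f => t f.1) = 0) : ∀ f ∈ F, ∀ g ∈ F, t f = t g := by
  have hshare : ∀ f ∈ F, ∀ g ∈ F, ∀ e, e ∈ f → e ∈ g → t f = t g := by
    intro f hf g hg e h1 h2
    by_cases hfg : f = g
    · rw [hfg]
    have := sum_face_two hG t (face_sub hG hf h1) hf hg hfg h1 h2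
    rw [ht] at this
    exact eq_of_add_zmod this.symm
  have hvert : ∀ v a b, ∀ f ∈ F, ∀ g ∈ F, s(v,a) ∈ f → s(v,b) ∈ g → t f = t g := by
    intro v a b f hf g hg h1 h2
    by_cases hab : a = b
    · subst hab; exact hshare f hf g hg _ h1 h2
    obtain ⟨k, hk, k1, k2, -⟩ := corner hG (face_adj hG hf h1) (face_adj hG hg h2) hab
    rw [hshare f hf k hk _ h1 k1, hshare k hk g hg _ k2 h2]
  have hnbr : ∀ v, ∃ a, G.Adj v a := by
    intro v
    have : 0 < G.degree v := by rw [hG.cubic v]; norm_num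
    exact (G.degree_pos_iff_exists_adj v).1 this
  have hface : ∀ v a, G.Adj v a → ∃ f ∈ F, s(v,a) ∈ f := by
    intro v a h
    obtain ⟨f, g, -, h2⟩ := edge_two hG (e := s(v,a)) h
    have : f ∈ F.filter (fun f => s(v,a) ∈ f) := by simp [h2]
    exact ⟨f, by simpa using this⟩
  have hwalk : ∀ v w, G.Walk v w → ∀ a b, ∀ f ∈ F, ∀ g ∈ F, s(v,a) ∈ f → s(w,b) ∈ g →
      t f = t g := by
    intro v w p
    induction p with
    | nil => intro a b; exact hvert _ a b
    | @cons x y z hxy p ih =>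
      intro a b f hf g hg h1 h2
      obtain ⟨k, hk, k1⟩ := hface x y hxy
      rw [hvert x a y f hf k hk h1 k1]
      exact ih x b k hk g hg (Sym2.eq_swap ▸ k1) h2
  have hne : ∀ f ∈ F, ∃ v a, s(v,a) ∈ f := by
    intro f hf
    have : 0 < f.card := by have := hG.face_size f hf; omega
    obtain ⟨e, he⟩ := Finset.card_pos.1 this
    induction e with | _ x y
    exact ⟨x, y, he⟩
  intro f hf g hg
  obtain ⟨v, a, h1⟩ := hne f hf
  obtain ⟨w, b, h2⟩ := hne g hg
  obtain ⟨p⟩ := hG.connected.preconnected v w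
  exact hwalk v w p a b f hf g hg h1 h2

lemma ker_A (hG : IsFullerene G F) (x : V → ZMod 2)
    (hx : (matA G).transpose.mulVec x = 0) : ∀ v w, x v = x w := by
  have hadj : ∀ v w, G.Adj v w → x v = x w := by
    intro v w h
    have := congrFun hx ⟨s(v,w), by simpa using h⟩
    simp only [Matrix.mulVec, dotProduct, Matrix.transpose_apply, matA, Pi.zero_apply, ite_mul,
      one_mul, zero_mul] at this
    rw [← Finset.sum_filter] at this
    have h2 : (Finset.univ.filter (fun u => u ∈ s(v,w))) = {v, w} := by ext; simp
    rw [h2, Finset.sum_pair h.ne] at this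
    exact eq_of_add_zmod this
  intro v w
  obtain ⟨p⟩ := hG.connected.preconnected v w
  induction p with
  | nil => rfl
  | cons h p ih => rw [hadj _ _ h, ih]

/-- Every even edge set is a mod 2 boundary of a set of faces. -/
lemma separate (hG : IsFullerene G F) (C : Finset (Sym2 V)) (hC : C ⊆ G.edgeFinset)
    (hev : ∀ v, Even (C.filter (fun e => v ∈ e)).card) :
    ∃ t : Finset (Sym2 V) → ZMod 2, ∀ f ∈ F, ∀ g ∈ F, f ≠ g → ∀ e ∈ C, e ∈ f → e ∈ g →
      t f + t g = 1 := by
  obtain ⟨s, hs⟩ := exact_of_card (matA G) (matB G F) (by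
      ext v f
      rw [Matrix.mul_apply]
      simp only [matB]
      rw [sum_inc f.1 (face_sub hG f.2) v, Matrix.zero_apply, ZMod.natCast_eq_zero_iff]
      exact (face_even hG f.2 v).two_dvd)
    (finrank_le_one_of_const _ fun w hw => ker_A hG w hw)
    (finrank_le_one_of_const _ fun w hw x y => by
      have h := ker_B hG (fun f => if h : f ∈ F then w ⟨f, h⟩ else 0)
        (by simpa using hw) x.1 x.2 y.1 y.2
      simpa using h)
    (by
      have := hG.euler
      simp only [Fintype.card_coe]
      omega)
    (fun e => if e.1 ∈ C then 1 else 0) (by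
      ext v
      simp only [Matrix.mulVec, dotProduct]
      rw [sum_inc C hC v, Pi.zero_apply, ZMod.natCast_eq_zero_iff]
      exact (hev v).two_dvd)
  refine ⟨fun f => if h : f ∈ F then s ⟨f, h⟩ else 0, ?_⟩
  intro f hf g hg hfg e heC h1 h2
  have h := sum_face_two hG (fun f => if h : f ∈ F then s ⟨f, h⟩ else 0) (hC heC) hf hg hfg h1 h2
  rw [← h]
  have : (fun f : F => (fun f => if h : f ∈ F then s ⟨f, h⟩ else 0) f.1) = s := by
    ext f; simp
  rw [this, hs]
  simp [heC]

lemma tri_split (hG : IsFullerene G F) {a b c : V} (hab : G.Adj a b) (hbc : G.Adj b c)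
    (hca : G.Adj c a) : False := by
  have n1 := hab.ne
  have n2 := hbc.ne
  have n3 := hca.ne
  obtain ⟨t, ht⟩ := separate hG {s(a,b), s(b,c), s(c,a)} (by
      intro e he
      simp only [Finset.mem_insert, Finset.mem_singleton] at he
      rcases he with rfl | rfl | rfl <;> simpa) (by
      intro v
      have e1 : s(a,b) ≠ s(b,c) := by simp [Sym2.eq_iff]; grind
      have e2 : s(a,b) ≠ s(c,a) := by simp [Sym2.eq_iff]; grind
      have e3 : s(b,c) ≠ s(c,a) := by simp [Sym2.eq_iff]; grind
      rw [Finset.card_filter, Finset.sum_insert (by simp [e1, e2]), Finset.sum_pair e3]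
      simp only [Sym2.mem_iff]
      by_cases h1 : v = a <;> by_cases h2 : v = b <;> by_cases h3 : v = c <;>
        simp_all <;> decide)
  have same : ∀ f ∈ F, ∀ g ∈ F, t f = t g → ∀ e ∈ ({s(a,b), s(b,c), s(c,a)} : Finset (Sym2 V)),
      e ∈ f → e ∈ g → f = g := by
    intro f hf g hg hfg e he h1 h2
    by_contra hne
    have := ht f hf g hg hne e he h1 h2
    rw [hfg, CharTwo.add_self_eq_zero] at this
    exact zero_ne_one this
  obtain ⟨ka, hka, a1, a2, -⟩ := corner hG hab hca.symm n2
  obtain ⟨kb, hkb, b1, b2, -⟩ := corner hG hbc hab.symm n3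
  obtain ⟨kc, hkc, c1, c2, -⟩ := corner hG hca hbc.symm n1
  rw [Sym2.eq_swap] at a2 b2 c2
  have two : ∀ x y z : ZMod 2, x = y ∨ y = z ∨ z = x := by decide
  rcases two (t ka) (t kb) (t kc) with h | h | h
  · have := same _ hka _ hkb h _ (by simp) a1 b2
    subst this
    exact no_tri_face hG hka a1 b1 a2
  · have := same _ hkb _ hkc h _ (by simp) b1 c2
    subst this
    exact no_tri_face hG hkb b2 b1 c1
  · have := same _ hkc _ hka h _ (by simp) c1 a2
    subst this
    exact no_tri_face hG hkc a1 c2 c1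

/-- a 4-cycle -/
def Quad (G : SimpleGraph V) (a b c d : V) : Prop :=
  G.Adj a b ∧ G.Adj b c ∧ G.Adj c d ∧ G.Adj d a ∧ a ≠ c ∧ b ≠ d

lemma Quad.rot {a b c d : V} (h : Quad G a b c d) : Quad G b c d a := by
  obtain ⟨h1, h2, h3, h4, h5, h6⟩ := h
  exact ⟨h2, h3, h4, h1, h6, h5.symm⟩

lemma Quad.refl {a b c d : V} (h : Quad G a b c d) : Quad G a d c b := by
  obtain ⟨h1, h2, h3, h4, h5, h6⟩ := h
  exact ⟨h4.symm, h3.symm, h2.symm, h1.symm, h5, h6.symm⟩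

lemma quad_split (hG : IsFullerene G F) {a b c d : V} (h : Quad G a b c d)
    {ka kb kc kd} (hka : ka ∈ F) (hkb : kb ∈ F) (hkc : kc ∈ F) (hkd : kd ∈ F)
    (a1 : s(d,a) ∈ ka) (a2 : s(a,b) ∈ ka) (b1 : s(a,b) ∈ kb) (b2 : s(b,c) ∈ kb)
    (c1 : s(b,c) ∈ kc) (c2 : s(c,d) ∈ kc) (d1 : s(c,d) ∈ kd) (d2 : s(d,a) ∈ kd) :
    (ka = kb ∧ kc = kd ∧ ka ≠ kc) ∨ (ka = kd ∧ kb = kc ∧ ka ≠ kc) ∨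
    (ka ≠ kb ∧ ka ≠ kc ∧ ka ≠ kd ∧ kb ≠ kc ∧ kb ≠ kd ∧ kc ≠ kd) := by
  obtain ⟨hab, hbc, hcd, hda, hac, hbd⟩ := h
  have n1 := hab.ne
  have n2 := hbc.ne
  have n3 := hcd.ne
  have n4 := hda.ne
  obtain ⟨t, ht⟩ := separate hG {s(a,b), s(b,c), s(c,d), s(d,a)} (by
      intro e he
      simp only [Finset.mem_insert, Finset.mem_singleton] at he
      rcases he with rfl | rfl | rfl | rfl <;> simpa) (by
      intro v
      have e1 : s(a,b) ∉ ({s(b,c), s(c,d), s(d,a)} : Finset (Sym2 V)) := by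
        simp [Sym2.eq_iff]; grind
      have e2 : s(b,c) ∉ ({s(c,d), s(d,a)} : Finset (Sym2 V)) := by simp [Sym2.eq_iff]; grind
      have e3 : s(c,d) ≠ s(d,a) := by simp [Sym2.eq_iff]; grind
      rw [Finset.card_filter, Finset.sum_insert e1, Finset.sum_insert e2, Finset.sum_pair e3]
      simp only [Sym2.mem_iff]
      by_cases h1 : v = a <;> by_cases h2 : v = b <;> by_cases h3 : v = c <;>
        by_cases h4 : v = d <;> simp_all <;> decide)
  have same : ∀ f ∈ F, ∀ g ∈ F, t f = t g →
      ∀ e ∈ ({s(a,b), s(b,c), s(c,d), s(d,a)} : Finset (Sym2 V)),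
      e ∈ f → e ∈ g → f = g := by
    intro f hf g hg hfg e he h1 h2
    by_contra hne
    have := ht f hf g hg hne e he h1 h2
    rw [hfg, CharTwo.add_self_eq_zero] at this
    exact zero_ne_one this
  have s1 := fun h => same _ hka _ hkb h _ (by simp) a2 b1
  have s2 := fun h => same _ hkb _ hkc h _ (by simp) b2 c1
  have s3 := fun h => same _ hkc _ hkd h _ (by simp) c2 d1
  have s4 := fun h => same _ hkd _ hka h _ (by simp) d2 a1
  have q1 : ka ≠ kc := by
    rintro rfl; exact no_quad_face hG hka a2 c1 c2 a1 hac hbd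
  have q2 : kb ≠ kd := by
    rintro rfl; exact no_quad_face hG hkb b1 b2 d1 d2 hac hbd
  have two : ∀ x y z : ZMod 2, x = y ∨ y = z ∨ z = x := by decide
  have t1 := two (t ka) (t kb) (t kc)
  have t2 := two (t kb) (t kc) (t kd)
  have t3 := two (t kc) (t kd) (t ka)
  have t4 := two (t kd) (t ka) (t kb)
  grind

lemma list_card {f : Finset (Sym2 V)} (l : List (Sym2 V)) (hl : l.Nodup) (h : ∀ e ∈ l, e ∈ f) :
    l.length ≤ f.card := by
  rw [← List.toFinset_card_of_nodup hl]
  exact Finset.card_le_card (fun e he => h e (by simpa using he))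

lemma face_le (hG : IsFullerene G F) {f} (hf : f ∈ F) : f.card ≤ 6 := by
  have := hG.face_size f hf; omega

lemma caseA (hG : IsFullerene G F) {v1 v2 v3 v4 : V} (h : Quad G v1 v2 v3 v4) {f} (hf : f ∈ F)
    (f1 : s(v4,v1) ∈ f) (f2 : s(v1,v2) ∈ f) (f3 : s(v2,v3) ∈ f) :
    ∃ u3 u4, u3 ≠ v2 ∧ u3 ≠ v4 ∧ u4 ≠ v1 ∧ u4 ≠ v3 ∧ s(v3,u3) ∈ f ∧ s(v4,u4) ∈ f ∧
      G.Adj u3 u4 ∧ f.card = 6 := by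
  obtain ⟨hab, hbc, hcd, hda, hac, hbd⟩ := h
  obtain ⟨u4, p1, p2, -⟩ := face_two hG hf f1
  obtain ⟨u3, q1, q2, -⟩ := face_two hG hf (v := v3) (a := v2) (Sym2.eq_swap ▸ f3)
  have hu4 : u4 ≠ v3 := by
    rintro rfl; exact no_quad_face hG hf f2 f3 (Sym2.eq_swap ▸ p2) f1 hac hbd
  have hu3 : u3 ≠ v4 := by
    rintro rfl; exact no_quad_face hG hf f2 f3 q2 f1 hac hbd
  have a4 := face_adj hG hf p2
  have a3 := face_adj hG hf q2
  have hne : u3 ≠ u4 := by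
    rintro rfl; exact tri_split hG hcd a4 a3.symm
  have d1 : u3 ≠ v1 := by
    rintro rfl; exact tri_split hG hab hbc a3
  have d2 : u4 ≠ v2 := by
    rintro rfl; exact tri_split hG hbc hcd a4
  obtain ⟨x, x1, x2, -⟩ := face_two hG hf (v := u3) (a := v3) (Sym2.eq_swap ▸ q2)
  obtain ⟨y, y1, y2, -⟩ := face_two hG hf (v := u4) (a := v4) (Sym2.eq_swap ▸ p2)
  have n1 := hab.ne
  have n2 := hbc.ne
  have n3 := hcd.ne
  have n4 := hda.ne
  have n5 := a3.ne
  have n6 := a4.ne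
  have hle := face_le hG hf
  have hsz := hG.face_size f hf
  have hxy : s(u3,x) = s(u4,y) := by
    by_contra hxy
    have := list_card (f := f) [s(v4,v1), s(v1,v2), s(v2,v3), s(v3,u3), s(v4,u4), s(u3,x), s(u4,y)]
      (by simp only [List.nodup_cons, List.mem_cons, Sym2.eq_iff, List.not_mem_nil] at hxy ⊢; grind)
      (by simp [*])
    simp at this
    omega
  have hx : x = u4 := by simp only [Sym2.eq_iff] at hxy; grind
  subst hx
  have := list_card (f := f) [s(v4,v1), s(v1,v2), s(v2,v3), s(v3,u3), s(v4,x), s(u3,x)]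
      (by simp only [List.nodup_cons, List.mem_cons, Sym2.eq_iff, List.not_mem_nil]; grind)
      (by simp [*])
  simp at this
  exact ⟨u3, x, q1, hu3, p1, hu4, q2, p2, face_adj hG hf x2, by omega⟩

lemma pathB (hG : IsFullerene G F) {v1 v2 v4 u2 u4 : V} {f} (hf : f ∈ F)
    (f1 : s(v4,v1) ∈ f) (f2 : s(v1,v2) ∈ f) (f3 : s(v2,u2) ∈ f) (f4 : s(v4,u4) ∈ f)
    (h24 : v2 ≠ v4) (hu2 : u2 ≠ v1) (hu4 : u4 ≠ v1) :
    s(u2,u4) ∈ f ∨ (f.card = 6 ∧ ∃ x, x ≠ v2 ∧ x ≠ v4 ∧ s(u2,x) ∈ f ∧ s(x,u4) ∈ f) := by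
  have a1 := face_adj hG hf f1
  have a2 := face_adj hG hf f2
  have a3 := face_adj hG hf f3
  have a4 := face_adj hG hf f4
  have hne : u2 ≠ u4 := by
    rintro rfl; exact no_quad_face hG hf f1 f2 f3 (Sym2.eq_swap ▸ f4) h24.symm hu2.symm
  have d1 : u2 ≠ v4 := by
    rintro rfl; exact tri_split hG a1 a2 a3
  have d2 : u4 ≠ v2 := by
    rintro rfl; exact tri_split hG a1 a2 a4.symm
  obtain ⟨x, x1, x2, -⟩ := face_two hG hf (v := u2) (a := v2) (Sym2.eq_swap ▸ f3)
  obtain ⟨y, y1, y2, -⟩ := face_two hG hf (v := u4) (a := v4) (Sym2.eq_swap ▸ f4)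
  by_cases hx : x = u4
  · subst hx; exact Or.inl x2
  by_cases hy : y = u2
  · subst hy; left; rw [Sym2.eq_swap]; exact y2
  right
  have n1 := a1.ne
  have n2 := a2.ne
  have n3 := a3.ne
  have n4 := a4.ne
  have n5 := (face_adj hG hf x2).ne
  have n6 := (face_adj hG hf y2).ne
  have hle := face_le hG hf
  have h6 := list_card (f := f) [s(v4,v1), s(v1,v2), s(v2,u2), s(v4,u4), s(u2,x), s(u4,y)]
      (by simp only [List.nodup_cons, List.mem_cons, Sym2.eq_iff, List.not_mem_nil]; grind)
      (by simp [*])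
  simp at h6
  have hx4 : x ≠ v4 := by
    rintro rfl
    have := face_uniq hG hf f1 f4 hu4.symm (c := u2) (Sym2.eq_swap ▸ x2)
    grind
  have hx1 : x ≠ v1 := by
    rintro rfl
    have := face_uniq hG hf f2 (b := v4) (Sym2.eq_swap ▸ f1) h24 (c := u2) (Sym2.eq_swap ▸ x2)
    grind
  by_cases hxy : x = y
  · subst hxy
    exact ⟨by omega, x, x1, hx4, x2, Sym2.eq_swap ▸ y2⟩
  exfalso
  obtain ⟨z, z1, z2, -⟩ := face_two hG hf (v := x) (a := u2) (Sym2.eq_swap ▸ x2)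
  have n7 := (face_adj hG hf z2).ne
  have h7 := list_card (f := f)
      [s(v4,v1), s(v1,v2), s(v2,u2), s(v4,u4), s(u2,x), s(u4,y), s(x,z)]
      (by simp only [List.nodup_cons, List.mem_cons, Sym2.eq_iff, List.not_mem_nil]; grind)
      (by simp [*])
  simp at h7
  omega

lemma caseB (hG : IsFullerene G F) {v1 v2 v3 v4 : V} (h : Quad G v1 v2 v3 v4)
    {k1 k2 k3 k4} (hk1 : k1 ∈ F) (hk2 : k2 ∈ F) (hk3 : k3 ∈ F) (hk4 : k4 ∈ F)
    (a1 : s(v4,v1) ∈ k1) (a2 : s(v1,v2) ∈ k1) (b1 : s(v1,v2) ∈ k2) (b2 : s(v2,v3) ∈ k2)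
    (c1 : s(v2,v3) ∈ k3) (c2 : s(v3,v4) ∈ k3) (d1 : s(v3,v4) ∈ k4) (d2 : s(v4,v1) ∈ k4)
    (n12 : k1 ≠ k2) (n13 : k1 ≠ k3) (n14 : k1 ≠ k4) (n23 : k2 ≠ k3) (n34 : k3 ≠ k4) :
    k1.card = 6 ∧ ∃ u4 u2 x y, Quad G u4 x u2 y ∧ u4 ≠ v1 ∧ u4 ≠ v3 ∧
      s(v4,u4) ∈ k1 ∧ s(v4,u4) ∈ k3 := by
  obtain ⟨hab, hbc, hcd, hda, hac, hbd⟩ := h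
  obtain ⟨u4, p1, p2, -⟩ := face_two hG hk1 a1
  obtain ⟨u2, q1, q2, -⟩ := face_two hG hk1 (v := v2) (a := v1) (Sym2.eq_swap ▸ a2)
  have p3 : u4 ≠ v3 := by
    rintro rfl
    exact n14 (corner_uniq hG hk1 hk4 p1.symm a1 p2 d2 (Sym2.eq_swap ▸ d1))
  have q3 : u2 ≠ v3 := by
    rintro rfl
    exact n12 (corner_uniq hG hk1 hk2 q1 q2 (Sym2.eq_swap ▸ a2) b2 (Sym2.eq_swap ▸ b1))
  have e4 : s(v4,u4) ∈ k3 := by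
    obtain ⟨w, w1, w2, -⟩ := face_two hG hk3 (v := v4) (a := v3) (Sym2.eq_swap ▸ c2)
    have w3 : w ≠ v1 := by
      rintro rfl
      exact n34 (corner_uniq hG hk3 hk4 w1 w2 (Sym2.eq_swap ▸ c2) d2 (Sym2.eq_swap ▸ d1))
    obtain ⟨r, -, -, -, hr⟩ := third hG hda hcd.symm hac
    have := hr w (face_adj hG hk3 w2)
    have := hr u4 (face_adj hG hk1 p2)
    have : w = u4 := by grind
    rwa [← this]
  have e2 : s(v2,u2) ∈ k3 := by
    obtain ⟨w, w1, w2, -⟩ := face_two hG hk3 (v := v2) (a := v3) c1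
    have w3 : w ≠ v1 := by
      rintro rfl
      exact n23 (corner_uniq hG hk2 hk3 w1 (Sym2.eq_swap ▸ b1) b2 w2 c1)
    obtain ⟨r, -, -, -, hr⟩ := third hG hab.symm hbc hac
    have := hr w (face_adj hG hk3 w2)
    have := hr u2 (face_adj hG hk1 q2)
    have : w = u2 := by grind
    rwa [← this]
  have hne : u2 ≠ u4 := by
    rintro rfl; exact no_quad_face hG hk1 a1 a2 q2 (Sym2.eq_swap ▸ p2) hbd.symm q1.symm
  have r1 := pathB hG hk1 a1 a2 q2 p2 hbd q1 p1
  have r3 := pathB hG hk3 (v4 := v4) (v1 := v3) (v2 := v2) (u2 := u2) (u4 := u4)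
    (Sym2.eq_swap ▸ c2) (Sym2.eq_swap ▸ c1) e2 e4 hbd q3 p3
  have p4 := (face_adj hG hk1 p2)
  have h4 : v2 ≠ u4 := by
    rintro rfl; exact tri_split hG hab p4.symm hda
  rcases r1 with r1 | ⟨s1, x, x1, x2, x3, x4⟩ <;> rcases r3 with r3 | ⟨s3, y, y1, y2, y3, y4⟩
  · exact (n13 (corner_uniq hG hk1 hk3 (v := u2) (a := v2) (b := u4) h4
      (Sym2.eq_swap ▸ q2) r1 (Sym2.eq_swap ▸ e2) r3)).elim
  · exact (tri_split hG (face_adj hG hk1 r1) (face_adj hG hk3 y4).symm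
      (face_adj hG hk3 y3).symm).elim
  · exact (tri_split hG (face_adj hG hk3 r3) (face_adj hG hk1 x4).symm
      (face_adj hG hk1 x3).symm).elim
  · refine ⟨s1, u4, u2, x, y, ⟨(face_adj hG hk1 x4).symm, (face_adj hG hk1 x3).symm,
      face_adj hG hk3 y3, face_adj hG hk3 y4, hne.symm, ?_⟩, p1, p3, p2, e4⟩
    rintro rfl
    exact n13 (corner_uniq hG hk1 hk3 (v := u2) (a := v2) (b := x) x1.symm
      (Sym2.eq_swap ▸ q2) x3 (Sym2.eq_swap ▸ e2) y3)

/-- a face having two consecutive edges of a 4-cycle -/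
def IsCorner (G : SimpleGraph V) (f : Finset (Sym2 V)) : Prop :=
  ∃ a b c d, Quad G a b c d ∧ s(d,a) ∈ f ∧ s(a,b) ∈ f

lemma localA (hG : IsFullerene G F) {v1 v2 v3 v4 : V} (h : Quad G v1 v2 v3 v4)
    {f g} (hf : f ∈ F) (hg : g ∈ F)
    (f1 : s(v4,v1) ∈ f) (f2 : s(v1,v2) ∈ f) (f3 : s(v2,v3) ∈ f)
    (g1 : s(v2,v3) ∈ g) (g2 : s(v3,v4) ∈ g) (g3 : s(v4,v1) ∈ g) :
    f.card = 6 ∧ ∃ u, u ≠ v2 ∧ u ≠ v4 ∧ G.Adj v1 u ∧ (∃ x y z, Quad G u x y z) ∧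
      ∀ k ∈ F, s(v1,u) ∈ k → IsCorner G k := by
  obtain ⟨-, -, -, -, -, -, -, -, -, hc⟩ := caseA hG h hf f1 f2 f3
  obtain ⟨u1, u2, m1, m2, m3, m4, m5, m6, m7, -⟩ := caseA hG h.rot.rot hg g1 g2 g3
  have b1 := face_adj hG hg m5
  have b2 := face_adj hG hg m6
  have hab := h.1
  have hQ : Quad G v1 v2 u2 u1 := ⟨hab, b2, m7.symm, b1.symm, m4.symm, m2.symm⟩
  refine ⟨hc, u1, m2, m1, b1, ⟨_, _, _, hQ.rot.rot.rot⟩, ?_⟩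
  intro k hk hku
  obtain ⟨w, w1, w2, -⟩ := face_two hG hk hku
  obtain ⟨r, -, -, -, hr⟩ := third hG hab h.2.2.2.1.symm h.2.2.2.2.2
  have e1 := hr w (face_adj hG hk w2)
  have e2 := hr u1 b1
  have : w = v2 ∨ w = v4 := by grind
  rcases this with rfl | rfl
  · exact ⟨_, _, _, _, hQ, Sym2.eq_swap ▸ hku, w2⟩
  · have : k = g := corner_uniq hG hk hg w1 w2 hku (Sym2.eq_swap ▸ g3) m5
    subst this
    exact ⟨_, _, _, _, h.rot.rot, g1, g2⟩

lemma quad_local (hG : IsFullerene G F) {v1 v2 v3 v4 : V} (h : Quad G v1 v2 v3 v4)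
    {k1} (hk1 : k1 ∈ F) (a1 : s(v4,v1) ∈ k1) (a2 : s(v1,v2) ∈ k1) :
    k1.card = 6 ∧ ∃ u, u ≠ v2 ∧ u ≠ v4 ∧ G.Adj v1 u ∧ (∃ x y z, Quad G u x y z) ∧
      ∀ k ∈ F, s(v1,u) ∈ k → IsCorner G k := by
  obtain ⟨hab, hbc, hcd, hda, hac, hbd⟩ := id h
  obtain ⟨k2, hk2, b1, b2, -⟩ := corner hG hab.symm hbc hac
  obtain ⟨k3, hk3, c1, c2, -⟩ := corner hG hbc.symm hcd hbd
  obtain ⟨k4, hk4, d1, d2, -⟩ := corner hG hcd.symm hda hac.symm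
  rw [Sym2.eq_swap] at b1 c1 d1
  rcases quad_split hG h hk1 hk2 hk3 hk4 a1 a2 b1 b2 c1 c2 d1 d2 with
    ⟨rfl, rfl, -⟩ | ⟨rfl, rfl, -⟩ | ⟨n12, n13, n14, n23, n24, n34⟩
  · exact localA hG h hk1 hk3 a1 a2 b2 c1 c2 d2
  · obtain ⟨r1, u, r2, r3, r4⟩ := localA hG h.refl hk1 hk2 (Sym2.eq_swap ▸ a2)
      (Sym2.eq_swap ▸ a1) (Sym2.eq_swap ▸ d1) (Sym2.eq_swap ▸ c2) (Sym2.eq_swap ▸ c1)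
      (Sym2.eq_swap ▸ b1)
    exact ⟨r1, u, r3, r2, r4⟩
  · obtain ⟨s1, -⟩ := caseB hG h hk1 hk2 hk3 hk4 a1 a2 b1 b2 c1 c2 d1 d2 n12 n13 n14 n23 n34
    obtain ⟨-, u, u2, x, y, hQ, m1, m2, m3, m4⟩ := caseB hG h.rot hk2 hk3 hk4 hk1 b1 b2 c1 c2 d1 d2
      a1 a2 n23 n24 n12.symm n34 n14.symm
    have b := face_adj hG hk2 m3
    refine ⟨s1, u, m1, m2, b, ⟨_, _, _, hQ⟩, ?_⟩
    intro k hk hku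
    obtain ⟨w, w1, w2, -⟩ := face_two hG hk hku
    obtain ⟨r, -, -, -, hr⟩ := third hG hab hda.symm hbd
    have e1 := hr w (face_adj hG hk w2)
    have e2 := hr u b
    have : w = v2 ∨ w = v4 := by grind
    rcases this with rfl | rfl
    · have : k = k2 := corner_uniq hG hk hk2 w1 w2 hku b1 m3
      subst this
      exact ⟨_, _, _, _, h.rot, b1, b2⟩
    · have : k = k4 := corner_uniq hG hk hk4 w1 w2 hku (Sym2.eq_swap ▸ d2) m4
      subst this
      exact ⟨_, _, _, _, h.rot.rot.rot, d1, d2⟩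

lemma all_inQuad (hG : IsFullerene G F) {v w : V} (p : G.Walk v w)
    (h : ∃ x y z, Quad G v x y z) : ∃ x y z, Quad G w x y z := by
  induction p with
  | nil => exact h
  | @cons a b c hab p ih =>
    apply ih
    obtain ⟨x, y, z, hQ⟩ := h
    obtain ⟨k, hk, k1, k2, -⟩ := corner hG hQ.2.2.2.1.symm hQ.1 hQ.2.2.2.2.2.symm
    obtain ⟨-, u, u1, u2, u3, u4, -⟩ := quad_local hG hQ hk (Sym2.eq_swap ▸ k1) k2
    obtain ⟨r, -, -, -, hr⟩ := third hG hQ.2.2.2.1.symm hQ.1 hQ.2.2.2.2.2.symm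
    have e1 := hr b hab
    have e2 := hr u u3
    have : b = x ∨ b = z ∨ b = u := by grind
    rcases this with rfl | rfl | rfl
    · exact ⟨_, _, _, hQ.rot⟩
    · exact ⟨_, _, _, hQ.rot.rot.rot⟩
    · exact u4

lemma exists_pentagon (hG : IsFullerene G F) : ∃ f ∈ F, f.card = 5 := by
  by_contra! hno
  have h6 : ∀ f ∈ F, f.card = 6 := fun f hf => (hG.face_size f hf).resolve_left (hno f hf)
  have h1 := G.sum_degrees_eq_twice_card_edges
  simp only [hG.cubic, Finset.sum_const, Finset.card_univ, smul_eq_mul] at h1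
  have h2 : ∑ f ∈ F, f.card = ∑ e ∈ G.edgeFinset, (F.filter (fun f => e ∈ f)).card := by
    have := Finset.sum_card_bipartiteAbove_eq_sum_card_bipartiteBelow
      (s := F) (t := G.edgeFinset) (fun f e => e ∈ f)
    simp only [Finset.bipartiteAbove, Finset.bipartiteBelow] at this
    rw [← this]
    apply Finset.sum_congr rfl
    intro f hf
    rw [Finset.filter_mem_eq_inter, Finset.inter_eq_right.2 (face_sub hG hf)]
  rw [Finset.sum_congr rfl h6, Finset.sum_congr rfl hG.edge_faces] at h2
  simp only [Finset.sum_const, smul_eq_mul] at h2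
  have := hG.euler
  omega

lemma no_quad (hG : IsFullerene G F) {a b c d : V} (h : Quad G a b c d) : False := by
  obtain ⟨f, hf, h5⟩ := exists_pentagon hG
  obtain ⟨e, he⟩ := Finset.card_pos.1 (by omega : 0 < f.card)
  induction e with | _ v w
  obtain ⟨p⟩ := hG.connected.preconnected a v
  obtain ⟨x, y, z, hQ⟩ := all_inQuad hG p ⟨_, _, _, h⟩
  obtain ⟨k, hk, k1, k2, -⟩ := corner hG hQ.2.2.2.1.symm hQ.1 hQ.2.2.2.2.2.symm
  obtain ⟨hk6, u, u1, u2, u3, -, u5⟩ := quad_local hG hQ hk (Sym2.eq_swap ▸ k1) k2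
  obtain ⟨w', w1, w2, -⟩ := face_two hG hf he
  obtain ⟨r, -, -, -, hr⟩ := third hG hQ.2.2.2.1.symm hQ.1 hQ.2.2.2.2.2.symm
  have e1 := hr w (face_adj hG hf he)
  have e2 := hr w' (face_adj hG hf w2)
  have e3 := hr u u3
  have hcase : s(v,u) ∈ f ∨ (s(v,x) ∈ f ∧ s(v,z) ∈ f) := by grind
  have hcor : IsCorner G f := by
    rcases hcase with h | ⟨h1, h2⟩
    · exact u5 f hf h
    · exact ⟨_, _, _, _, hQ, Sym2.eq_swap ▸ h2, h1⟩
  obtain ⟨_, _, _, _, hQ', g1, g2⟩ := hcor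
  have := (quad_local hG hQ' hf g1 g2).1
  omega

end Fullerene

/-- Every fullerene graph has girth `5`. -/
theorem fullerene_girth_five {V : Type*} [Fintype V] [DecidableEq V]
    (G : SimpleGraph V) [DecidableRel G.Adj] (F : Finset (Finset (Sym2 V)))
    (hG : IsFullerene G F) : G.egirth = 5 := by
  apply le_antisymm
  · obtain ⟨f, hf, h5⟩ := Fullerene.exists_pentagon hG
    obtain ⟨v, w, hw, rfl⟩ := hG.face_cycle f hf
    rw [List.toFinset_card_of_nodup hw.edges_nodup, Walk.length_edges] at h5
    have := SimpleGraph.egirth_le_length hw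
    rw [h5] at this
    exact_mod_cast this
  · rw [SimpleGraph.le_egirth]
    intro a w hw
    have h3 := hw.three_le_length
    suffices 5 ≤ w.length by exact_mod_cast this
    by_contra hlt
    have hnd := hw.support_nodup
    match w, hw, h3, hlt, hnd with
    | .cons h1 (.cons h2 (.cons h3 .nil)), _, _, _, _ => exact Fullerene.tri_split hG h1 h2 h3
    | .cons h1 (.cons h2 (.cons h3 (.cons h4 .nil))), _, _, _, hnd =>
      simp at hnd
      exact Fullerene.no_quad hG ⟨h1, h2, h3, h4, by grind, by grind⟩
    | .cons _ (.cons _ (.cons _ (.cons _ (.cons _ _)))), _, _, hlt, _ =>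
      simp at hlt
end

section
/- Every fullerene graph is 3-connected. -/
namespace Ful
variable {V : Type*} [Fintype V] [DecidableEq V]
    {G : SimpleGraph V} [DecidableRel G.Adj] {F : Finset (Finset (Sym2 V))}

lemma face_adj (hG : IsFullerene G F) {f} (hf : f ∈ F) {a b : V} (h : s(a,b) ∈ f) : G.Adj a b := by
  obtain ⟨v, w, hw, rfl⟩ := hG.face_cycle f hf
  exact w.adj_of_mem_edges (by simpa using h)

lemma cut (hG : IsFullerene G F) {f} (hf : f ∈ F) (A : Set V) {x z : V} (hx : x ∈ A) (hz : z ∉ A)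
    (h : s(x,z) ∈ f) : ∃ x' z', x' ∈ A ∧ z' ∉ A ∧ s(x',z') ∈ f ∧ ¬ (x' = x ∧ z' = z) := by
  obtain ⟨v, w, hw, rfl⟩ := hG.face_cycle f hf
  set H : SimpleGraph V := SimpleGraph.fromEdgeSet (w.edges.toFinset : Set (Sym2 V)) with hH
  have hadj : ∀ a b, H.Adj a b → s(a,b) ∈ w.edges := by
    intro a b hab
    simpa using (hab : _ ∧ _).1
  have hw' : ∀ e ∈ w.edges, e ∈ H.edgeSet := by
    intro e he
    induction e with | _ a b =>
    have := w.adj_of_mem_edges he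
    simp [hH, this.ne, he]
  have hc := hw.transfer hw'
  have h1 := (SimpleGraph.adj_and_reachable_delete_edges_iff_exists_cycle (G := H) (v := x) (w := z)).2
    ⟨v, _, hc, by simpa using h⟩
  obtain ⟨p⟩ := h1.2
  obtain ⟨d, hd, hd1, hd2⟩ := p.exists_boundary_dart A hx hz
  have := d.adj
  refine ⟨d.fst, d.snd, hd1, hd2, ?_, ?_⟩
  · have h3 : H.Adj d.fst d.snd := by
      rw [SimpleGraph.deleteEdges_adj] at this
      exact this.1
    simpa using hadj _ _ h3
  · rintro ⟨e1, e2⟩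
    rw [SimpleGraph.deleteEdges_adj] at this
    exact this.2 (by simp [e1, e2])

lemma face_next (hG : IsFullerene G F) {f} (hf : f ∈ F) {a b : V} (h : s(b,a) ∈ f) :
    ∃ c, c ≠ a ∧ s(b,c) ∈ f ∧ ∀ d, s(b,d) ∈ f → d = a ∨ d = c := by
  obtain ⟨v, w, hw, rfl⟩ := hG.face_cycle f hf
  have h' : s(b,a) ∈ w.edges := by simpa using h
  have h2 := hw.ncard_neighborSet_toSubgraph_eq_two (w.fst_mem_support_of_mem_edges h')
  obtain ⟨c, d, hcd, hs⟩ := Set.ncard_eq_two.1 h2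
  have key : ∀ t, s(b,t) ∈ w.edges.toFinset ↔ t = c ∨ t = d := by
    intro t
    have := Set.ext_iff.1 hs t
    simp only [SimpleGraph.Subgraph.mem_neighborSet, Set.mem_insert_iff, Set.mem_singleton_iff] at this
    rw [← this, ← SimpleGraph.Subgraph.mem_edgeSet, SimpleGraph.Walk.mem_edges_toSubgraph]
    simp
  rcases (key a).1 h with rfl | rfl
  · exact ⟨d, hcd.symm, (key d).2 (.inr rfl), fun t ht => (key t).1 ht⟩
  · exact ⟨c, hcd, (key c).2 (.inl rfl), fun t ht => ((key t).1 ht).symm⟩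

lemma third (hG : IsFullerene G F) {a b c : V} (hab : G.Adj a b) (hac : G.Adj a c) (hbc : b ≠ c) :
    ∃ d, d ≠ b ∧ d ≠ c ∧ G.Adj a d ∧ ∀ e, G.Adj a e → e = b ∨ e = c ∨ e = d := by
  have h3 := hG.cubic a
  rw [← SimpleGraph.card_neighborFinset_eq_degree] at h3
  have hsub : ({b, c} : Finset V) ⊆ G.neighborFinset a := by
    intro t; simp; rintro (rfl | rfl) <;> assumption
  have h4 : (G.neighborFinset a \ {b, c}).card = 1 := by
    rw [Finset.card_sdiff_of_subset hsub, h3, Finset.card_pair hbc]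
  obtain ⟨d, hd⟩ := Finset.card_eq_one.1 h4
  have key : ∀ t, (G.Adj a t ∧ ¬ (t = b ∨ t = c)) ↔ t = d := by
    intro t
    have := Finset.ext_iff.1 hd t
    simpa using this
  have := (key d).2 rfl
  refine ⟨d, by tauto, by tauto, this.1, fun e he => ?_⟩
  have := key e
  tauto

lemma two_faces (hG : IsFullerene G F) {a b : V} (hab : G.Adj a b) :
    ∃ f g, f ∈ F ∧ g ∈ F ∧ f ≠ g ∧ s(a,b) ∈ f ∧ s(a,b) ∈ g ∧
      ∀ h ∈ F, s(a,b) ∈ h → h = f ∨ h = g := by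
  obtain ⟨f, g, hfg, hs⟩ := Finset.card_eq_two.1 (hG.edge_faces s(a,b) (by simpa using hab))
  have key : ∀ h, (h ∈ F ∧ s(a,b) ∈ h) ↔ h = f ∨ h = g := by
    intro h
    simpa using Finset.ext_iff.1 hs h
  have h1 := (key f).2 (.inl rfl)
  have h2 := (key g).2 (.inr rfl)
  exact ⟨f, g, h1.1, h2.1, hfg, h1.2, h2.2, fun h hh hm => (key h).1 ⟨hh, hm⟩⟩

/-- two faces sharing two edges at a vertex coincide -/
lemma uniq (hG : IsFullerene G F) {f g} (hf : f ∈ F) (hg : g ∈ F) {b a c : V} (hac : a ≠ c)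
    (h1 : s(b,a) ∈ f) (h2 : s(b,c) ∈ f) (h3 : s(b,a) ∈ g) (h4 : s(b,c) ∈ g) : f = g := by
  by_contra hne
  obtain ⟨d, hda, hdc, hd, hN⟩ := third hG (face_adj hG hf h1) (face_adj hG hf h2) hac
  obtain ⟨h, -, hh, -, -, hm, -⟩ := two_faces hG hd
  have nd : ∀ k ∈ F, s(b,a) ∈ k → s(b,c) ∈ k → s(b,d) ∉ k := by
    intro k hk ka kc kd
    obtain ⟨t, ht, ht', hu⟩ := face_next hG hk ka
    rcases hu c kc with r | r <;> rcases hu d kd with r' | r' <;> grind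
  have hhf : h ≠ f := by rintro rfl; exact nd _ hf h1 h2 hm
  have hhg : h ≠ g := by rintro rfl; exact nd _ hg h3 h4 hm
  have three : ∀ t, s(b,t) ∈ f → s(b,t) ∈ g → s(b,t) ∈ h → False := by
    intro t tf tg th
    obtain ⟨k, l, _, _, _, _, _, hu⟩ := two_faces hG (face_adj hG hf tf)
    have := hu f hf tf
    have := hu g hg tg
    have := hu h hh th
    grind
  obtain ⟨t, ht, ht', hu⟩ := face_next hG hh hm
  rcases hN t (face_adj hG hh ht') with rfl | rfl | rfl
  · exact three _ h1 h3 ht'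
  · exact three _ h2 h4 ht'
  · exact ht rfl

lemma no_three (hG : IsFullerene G F) {f} (hf : f ∈ F) {b a c d : V} (hac : a ≠ c) (hda : d ≠ a)
    (hdc : d ≠ c) (h1 : s(b,a) ∈ f) (h2 : s(b,c) ∈ f) (h3 : s(b,d) ∈ f) : False := by
  obtain ⟨t, ht, ht', hu⟩ := face_next hG hf h1
  have := hu c h2
  have := hu d h3
  grind

lemma exists_face (hG : IsFullerene G F) {b a c : V} (hac : a ≠ c) (ha : G.Adj b a) (hc : G.Adj b c) :
    ∃ h ∈ F, s(b,a) ∈ h ∧ s(b,c) ∈ h := by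
  obtain ⟨d, hda, hdc, hd, hN⟩ := third hG ha hc hac
  obtain ⟨f, g, hf, hg, hfg, haf, hag, -⟩ := two_faces hG ha
  obtain ⟨t, ht, ht', -⟩ := face_next hG hf haf
  obtain ⟨r, hr, hr', -⟩ := face_next hG hg hag
  rcases hN t (face_adj hG hf ht') with rfl | rfl | rfl
  · exact absurd rfl ht
  · exact ⟨f, hf, haf, ht'⟩
  rcases hN r (face_adj hG hg hr') with rfl | rfl | rfl
  · exact absurd rfl hr
  · exact ⟨g, hg, hag, hr'⟩
  exact absurd (uniq hG hf hg ht.symm haf ht' hag hr') hfg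

/-- At `b` with neighbours `a,c,d`: a face `f` uses `a,c`; another face `h` using `a` uses `d`. -/
lemma turn (hG : IsFullerene G F) {f h} (hf : f ∈ F) (hh : h ∈ F) (hne : h ≠ f) {b a c d : V}
    (hac : a ≠ c) (hN : ∀ e, G.Adj b e → e = a ∨ e = c ∨ e = d)
    (h1 : s(b,a) ∈ f) (h2 : s(b,c) ∈ f) (h3 : s(b,a) ∈ h) : s(b,d) ∈ h := by
  obtain ⟨t, ht, ht', -⟩ := face_next hG hh h3
  rcases hN t (face_adj hG hh ht') with rfl | rfl | rfl
  · exact absurd rfl ht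
  · exact absurd (uniq hG hh hf hac h3 ht' h1 h2) hne
  · exact ht'

lemma tri (hG : IsFullerene G F) {f} (hf : f ∈ F) {a b c : V} (hab : s(a,b) ∈ f)
    (hbc : s(b,c) ∈ f) (hca : s(c,a) ∈ f) : False := by
  have n1 := (face_adj hG hf hab).ne
  have n2 := (face_adj hG hf hbc).ne
  have n3 := (face_adj hG hf hca).ne
  have hsz := hG.face_size f hf
  have hcl : ∀ x y, x ∈ ({a,b,c} : Finset V) → s(x,y) ∈ f → y ∈ ({a,b,c} : Finset V) := by
    intro x y hx hxy
    by_contra hy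
    simp only [Finset.mem_insert, Finset.mem_singleton, not_or] at hx hy
    rcases hx with rfl | rfl | rfl
    · exact no_three hG hf n2 hy.2.1 hy.2.2 hab (Sym2.eq_swap ▸ hca) hxy
    · exact no_three hG hf n3.symm hy.1 hy.2.2 (Sym2.eq_swap ▸ hab) hbc hxy
    · exact no_three hG hf n1 hy.1 hy.2.1 hca (Sym2.eq_swap ▸ hbc) hxy
  have hsub : f ⊆ {s(a,b), s(b,c), s(c,a)} := by
    obtain ⟨v, w, hw, rfl⟩ := hG.face_cycle f hf
    have ha : a ∈ w.support := w.fst_mem_support_of_mem_edges (by simpa using hab)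
    have hall : ∀ x ∈ w.support, x ∈ ({a,b,c} : Finset V) := by
      intro x hx
      have hx' : x ∈ (w.rotate a ha).support := by
        rw [SimpleGraph.Walk.mem_support_rotate_iff]; exact hx
      by_contra hxn
      obtain ⟨d, hd, hd1, hd2⟩ := ((w.rotate a ha).takeUntil x hx').exists_boundary_dart
        (({a,b,c} : Finset V) : Set V) (by simp) (by simpa using hxn)
      refine hd2 (hcl d.fst d.snd hd1 ?_)
      have : d.edge ∈ ((w.rotate a ha).takeUntil x hx').edges := List.mem_map_of_mem hd
      have := SimpleGraph.Walk.edges_takeUntil_subset_edges _ hx' this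
      have := (w.rotate_edges a ha).perm.mem_iff.1 this
      exact List.mem_toFinset.2 this
    intro e he
    induction e with | _ x y =>
    have he' : s(x,y) ∈ w.edges := by simpa using he
    have hx := hall x (w.fst_mem_support_of_mem_edges he')
    have hy := hall y (w.snd_mem_support_of_mem_edges he')
    have hne := (w.adj_of_mem_edges he').ne
    clear hcl hall hsz
    simp only [Finset.mem_insert, Finset.mem_singleton] at hx hy
    rcases hx with rfl | rfl | rfl <;> rcases hy with rfl | rfl | rfl <;> simp at hne ⊢
  have h1 := Finset.card_le_card hsub
  have h2 : ({s(a,b), s(b,c), s(c,a)} : Finset (Sym2 V)).card ≤ 3 := Finset.card_le_three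
  omega
lemma swp {f : Finset (Sym2 V)} {a b : V} (h : s(a,b) ∈ f) : s(b,a) ∈ f := Sym2.eq_swap ▸ h

/-- No bridge. -/
lemma no_bridge (hG : IsFullerene G F) (A : Set V) {x z : V} (hx : x ∈ A) (hz : z ∉ A)
    (h : G.Adj x z) (hc : ∀ u v, u ∈ A → v ∉ A → G.Adj u v → u = x ∧ v = z) : False := by
  obtain ⟨f, -, hf, -, -, hm, -⟩ := two_faces hG h
  obtain ⟨u, v, hu, hv, huv, hn⟩ := cut hG hf A hx hz hm
  exact hn (hc u v hu hv (face_adj hG hf huv))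

/-- `A` has exactly the two boundary edges `x₁z₁`, `x₂z₂`. -/
structure Cut2 (G : SimpleGraph V) (A : Finset V) (x₁ z₁ x₂ z₂ : V) : Prop where
  m1 : x₁ ∈ A
  m2 : x₂ ∈ A
  n1 : z₁ ∉ A
  n2 : z₂ ∉ A
  cross : ∀ u v, u ∈ A → v ∉ A → G.Adj u v → (u = x₁ ∧ v = z₁) ∨ (u = x₂ ∧ v = z₂)

lemma path_type (hG : IsFullerene G F) {A : Finset V} {x₁ z₁ x₂ z₂ : V} (hA : Cut2 G A x₁ z₁ x₂ z₂)
    (hx : x₁ ≠ x₂) {f} (hf : f ∈ F) (h1 : s(x₁,z₁) ∈ f) (h2 : s(x₂,z₂) ∈ f) :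
    (s(x₁,x₂) ∈ f ∧ 1 ≤ (f ∩ A.sym2).card) ∨
    (∃ p, p ∈ A ∧ p ≠ x₁ ∧ p ≠ x₂ ∧ s(x₁,p) ∈ f ∧ s(p,x₂) ∈ f ∧ 2 ≤ (f ∩ A.sym2).card) ∨
    (∃ p q, p ∈ A ∧ q ∈ A ∧ p ≠ x₁ ∧ p ≠ x₂ ∧ q ≠ x₁ ∧ q ≠ x₂ ∧ p ≠ q ∧ s(x₁,p) ∈ f ∧ s(p,q) ∈ f ∧
      s(q,x₂) ∈ f ∧ 3 ≤ (f ∩ A.sym2).card) ∨ 4 ≤ (f ∩ A.sym2).card := by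
  obtain ⟨m1, m2, n1, n2, cr⟩ := hA
  have le : ∀ S : Finset (Sym2 V), (∀ e ∈ S, e ∈ f ∧ e ∈ A.sym2) → S.card ≤ (f ∩ A.sym2).card := by
    intro S hS
    exact Finset.card_le_card (fun e he => Finset.mem_inter.2 (hS e he))
  have adj := fun {a b} => face_adj hG hf (a := a) (b := b)
  obtain ⟨p, hp, hxp, hpu⟩ := face_next hG hf h1
  obtain ⟨q, hq, hxq, hqu⟩ := face_next hG hf h2
  have pA : p ∈ A := by
    by_contra hpA
    rcases cr _ _ m1 hpA (adj hxp) with h | h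
    · exact hp h.2
    · exact hx h.1
  have qA : q ∈ A := by
    by_contra hqA
    rcases cr _ _ m2 hqA (adj hxq) with h | h
    · exact hx h.1.symm
    · exact hq h.2
  have px1 : p ≠ x₁ := (adj hxp).ne'
  have qx2 : q ≠ x₂ := (adj hxq).ne'
  by_cases px2 : p = x₂
  · subst px2
    left
    refine ⟨hxp, ?_⟩
    have := le {s(x₁,p)} (by simp [hxp, m1, pA])
    simpa using this
  right
  have qx1 : q ≠ x₁ := by
    rintro rfl
    rcases hpu _ (swp hxq) with r | r
    · exact n1 (r ▸ m2)
    · exact px2 r.symm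
  by_cases hpq : p = q
  · subst hpq
    left
    refine ⟨p, pA, px1, px2, hxp, swp hxq, ?_⟩
    have := le {s(x₁,p), s(x₂,p)} (by simp [hxp, hxq, m1, m2, pA])
    rwa [Finset.card_pair (by simp [hx, px1.symm])] at this
  right
  obtain ⟨r, hr, hpr, hru⟩ := face_next hG hf (swp hxp)
  obtain ⟨t, ht, hqt, htu⟩ := face_next hG hf (swp hxq)
  have rA : r ∈ A := by
    by_contra h
    rcases cr _ _ pA h (adj hpr) with h | h <;> tauto
  have tA : t ∈ A := by
    by_contra h
    rcases cr _ _ qA h (adj hqt) with h | h <;> tauto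
  have rx2 : r ≠ x₂ := by
    rintro rfl
    rcases hqu _ (swp hpr) with h | h
    · exact n2 (h ▸ pA)
    · exact hpq h
  have tx1 : t ≠ x₁ := by
    rintro rfl
    rcases hpu _ (swp hqt) with h | h
    · exact n1 (h ▸ qA)
    · exact hpq h.symm
  by_cases hrq : r = q
  · subst hrq
    left
    refine ⟨p, r, pA, rA, px1, px2, hr, rx2, hpq, hxp, hpr, swp hxq, ?_⟩
    have := le {s(x₁,p), s(x₂,r), s(p,r)} (by simp [hxp, hxq, hpr, m1, m2, pA, rA])
    rwa [Finset.card_eq_three.2 ⟨_, _, _, ?_, ?_, ?_, rfl⟩] at this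
    all_goals simp; grind
  right
  have := le {s(x₁,p), s(x₂,q), s(p,r), s(q,t)}
    (by simp [hxp, hxq, hpr, hqt, m1, m2, pA, qA, tA, rA])
  rwa [Finset.card_insert_of_notMem, Finset.card_eq_three.2 ⟨_, _, _, ?_, ?_, ?_, rfl⟩] at this
  all_goals simp; grind

lemma inner_le {f S : Finset (Sym2 V)} {A : Finset V} {n : ℕ} (hn : f.card ≤ 6) (hS : S ⊆ f)
    (hd : ∀ e ∈ S, e ∉ A.sym2) (hc : S.card + n = 6) : (f ∩ A.sym2).card ≤ n := by
  have h1 : S ∪ (f ∩ A.sym2) ⊆ f := Finset.union_subset hS Finset.inter_subset_left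
  have h2 : Disjoint S (f ∩ A.sym2) := by
    rw [Finset.disjoint_left]
    intro e he he'
    exact hd e he (Finset.mem_inter.1 he').2
  have := Finset.card_le_card h1
  rw [Finset.card_union_of_disjoint h2] at this
  omega

lemma nbr3 (hG : IsFullerene G F) {b a c d : V} (ha : G.Adj b a) (hc : G.Adj b c) (hd : G.Adj b d)
    (hac : a ≠ c) (had : a ≠ d) (hcd : c ≠ d) : ∀ e, G.Adj b e → e = a ∨ e = c ∨ e = d := by
  obtain ⟨t, _, _, _, h⟩ := third hG ha hc hac
  intro e he
  have := h e he
  have := h d hd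
  grind

def Bad (G : SimpleGraph V) (F : Finset (Finset (Sym2 V))) (A : Finset V) : Prop :=
  ∃ x₁ z₁ x₂ z₂, Cut2 G A x₁ z₁ x₂ z₂ ∧ ¬ (x₁ = x₂ ∧ z₁ = z₂) ∧ ∃ f g, f ∈ F ∧ g ∈ F ∧ f ≠ g ∧
    s(x₁,z₁) ∈ f ∧ s(x₂,z₂) ∈ f ∧ s(x₁,z₁) ∈ g ∧ s(x₂,z₂) ∈ g ∧
    (f ∩ A.sym2).card + (g ∩ A.sym2).card ≤ 4

lemma size_le (hG : IsFullerene G F) {f} (hf : f ∈ F) : f.card ≤ 6 := by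
  have := hG.face_size f hf
  omega

lemma case_ab (hG : IsFullerene G F) {A : Finset V} {x₁ z₁ x₂ z₂ : V} (hA : Cut2 G A x₁ z₁ x₂ z₂)
    (hx : x₁ ≠ x₂) {f g} (hf : f ∈ F) (hg : g ∈ F) (hf1 : s(x₁,z₁) ∈ f) (hf2 : s(x₂,z₂) ∈ f)
    (hxx : s(x₁,x₂) ∈ f) {y : V} (yA : y ∈ A) (y1 : y ≠ x₁) (y2 : y ≠ x₂) (g1 : s(x₁,y) ∈ g)
    (g2 : s(y,x₂) ∈ g) : False := by
  obtain ⟨m1, m2, n1, n2, cr⟩ := hA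
  have a1 := face_adj hG hf hf1
  have a2 := face_adj hG hf hf2
  have a3 := face_adj hG hf hxx
  have a4 := face_adj hG hg g1
  have a5 := face_adj hG hg g2
  obtain ⟨t, t1, t2, ht, hN⟩ := third hG a4.symm a5 hx
  have N1 := nbr3 hG a1 a3 a4 (by grind) (by grind) (by grind)
  have N2 := nbr3 hG a2 a3.symm a5.symm (by grind) (by grind) (by grind)
  have tA : t ∈ A := by
    by_contra h
    rcases cr _ _ yA h ht with h | h <;> tauto
  have ty := ht.ne'
  refine no_bridge hG ((A \ {x₁, x₂, y} : Finset V) : Set V) (x := t) (z := y) ?_ ?_ ht.symm ?_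
  · simp; tauto
  · simp
  · intro u v hu hv huv
    simp only [Finset.coe_sdiff, Set.mem_sdiff, Finset.mem_coe, Finset.mem_insert,
      Finset.mem_singleton] at hu hv
    have := cr u v hu.1
    have := fun h : v = x₁ => N1 u (h ▸ huv.symm)
    have := fun h : v = x₂ => N2 u (h ▸ huv.symm)
    have := fun h : v = y => hN u (h ▸ huv.symm)
    grind

lemma case_ac (hG : IsFullerene G F) {A : Finset V} {x₁ z₁ x₂ z₂ : V} (hA : Cut2 G A x₁ z₁ x₂ z₂)
    (hx : x₁ ≠ x₂) {f g} (hf : f ∈ F) (hg : g ∈ F) (hf1 : s(x₁,z₁) ∈ f) (hf2 : s(x₂,z₂) ∈ f)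
    (hg1 : s(x₁,z₁) ∈ g) (hg2 : s(x₂,z₂) ∈ g)
    (hxx : s(x₁,x₂) ∈ f) {p q : V} (pA : p ∈ A) (qA : q ∈ A) (p1 : p ≠ x₁) (p2 : p ≠ x₂)
    (q1 : q ≠ x₁) (q2 : q ≠ x₂) (hpq : p ≠ q) (g1 : s(x₁,p) ∈ g)
    (g2 : s(p,q) ∈ g) (g3 : s(q,x₂) ∈ g) : ∃ B, B.card < A.card ∧ Bad G F B := by
  obtain ⟨m1, m2, n1, n2, cr⟩ := hA
  have a1 := face_adj hG hf hf1
  have a2 := face_adj hG hf hf2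
  have a3 := face_adj hG hf hxx
  have a4 := face_adj hG hg g1
  have a5 := face_adj hG hg g2
  have a6 := face_adj hG hg g3
  obtain ⟨t, t1, t2, ht, Np⟩ := third hG a4.symm a5 q1.symm
  obtain ⟨r, r1, r2, hr, Nq⟩ := third hG a6 a5.symm p2.symm
  have N1 := nbr3 hG a1 a3 a4 (by grind) (by grind) (by grind)
  have N2 := nbr3 hG a2 a3.symm a6.symm (by grind) (by grind) (by grind)
  have tA : t ∈ A := by
    by_contra h
    rcases cr _ _ pA h ht with h | h <;> tauto
  have rA : r ∈ A := by
    by_contra h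
    rcases cr _ _ qA h hr with h | h <;> tauto
  have tp := ht.ne'
  have rq := hr.ne'
  have tx2 : t ≠ x₂ := by
    rintro rfl
    have := N2 p ht.symm
    grind
  have rx1 : r ≠ x₁ := by
    rintro rfl
    have := N1 q hr.symm
    grind
  have z1p : z₁ ≠ p := by grind
  have z2q : z₂ ≠ q := by grind
  -- the face through t p q r
  obtain ⟨k, hk, k1, k2⟩ := exists_face hG t2 ht a5
  have kg : k ≠ g := by
    rintro rfl
    exact no_three hG hk t2 t1.symm q1.symm k1 k2 (swp g1)
  have k3 : s(q,r) ∈ k := turn hG hg hk kg p2 (fun e he => by have := Nq e he; tauto)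
    (swp g2) g3 (swp k2)
  -- the face through t p x₁ x₂ q r
  obtain ⟨h, hh, h1, h2⟩ := exists_face hG t1 ht a4.symm
  have hng : h ≠ g := by
    rintro rfl
    exact no_three hG hh t2 t1.symm q1.symm h1 g2 h2
  have h3 : s(x₁,x₂) ∈ h := turn hG hg hh hng z1p.symm
    (fun e he => by have := N1 e he; tauto) g1 hg1 (swp h2)
  have hnf : h ≠ f := by
    rintro rfl
    exact no_three hG hh z1p (by grind) p2.symm hf1 (swp h2) h3
  have h4 : s(x₂,q) ∈ h := turn hG hf hh hnf (c := z₂) (by grind)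
    (fun e he => by have := N2 e he; tauto) (swp hxx) hf2 (swp h3)
  have h5 : s(q,r) ∈ h := turn hG hg hh hng p2.symm
    (fun e he => by have := Nq e he; tauto) g3 (swp g2) (swp h4)
  have hhk : h ≠ k := by
    rintro rfl
    exact no_three hG hh t2 t1.symm q1.symm h1 k2 h2
  have c1 : ({s(p,t), s(p,q), s(q,r)} : Finset (Sym2 V)).card = 3 := by
    rw [Finset.card_eq_three.2 ⟨_, _, _, ?_, ?_, ?_, rfl⟩]
    all_goals simp; grind
  have c2 : ({s(x₁,p), s(x₁,x₂), s(p,t), s(x₂,q), s(q,r)} : Finset (Sym2 V)).card = 5 := by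
    rw [Finset.card_insert_of_notMem, Finset.card_insert_of_notMem, 
      Finset.card_eq_three.2 ⟨_, _, _, ?_, ?_, ?_, rfl⟩]
    all_goals simp; grind
  have b1 : (k ∩ (A \ {x₁, x₂, p, q}).sym2).card ≤ 3 := by
    refine inner_le (size_le hG hk) (S := {s(p,t), s(p,q), s(q,r)}) ?_ ?_ (by rw [c1])
    · intro e; simp; rintro (rfl | rfl | rfl) <;> assumption
    · intro e; simp only [Finset.mem_insert, Finset.mem_singleton]
      rintro (rfl | rfl | rfl) <;> simp
  have b2 : (h ∩ (A \ {x₁, x₂, p, q}).sym2).card ≤ 1 := by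
    refine inner_le (size_le hG hh) (S := {s(x₁,p), s(x₁,x₂), s(p,t), s(x₂,q), s(q,r)}) ?_ ?_
      (by rw [c2])
    · intro e; simp; rintro (rfl | rfl | rfl | rfl | rfl) <;> first | assumption | exact swp h2
    · intro e; simp only [Finset.mem_insert, Finset.mem_singleton]
      rintro (rfl | rfl | rfl | rfl | rfl) <;> simp
  refine ⟨A \ {x₁, x₂, p, q}, Finset.card_lt_card ⟨Finset.sdiff_subset, fun hs => ?_⟩,
    t, p, r, q, ⟨?_, ?_, ?_, ?_, ?_⟩, ?_, h, k, hh, hk, hhk, swp h1, swp h5, swp k1, swp k3, by omega⟩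
  · have := hs m1
    simp at this
  · simp; tauto
  · simp; tauto
  · simp
  · simp
  · intro u v hu hv huv
    simp only [Finset.mem_sdiff, Finset.mem_insert, Finset.mem_singleton] at hu hv
    have := cr u v hu.1
    have := fun h : v = x₁ => N1 u (h ▸ huv.symm)
    have := fun h : v = x₂ => N2 u (h ▸ huv.symm)
    have := fun h : v = p => Np u (h ▸ huv.symm)
    have := fun h : v = q => Nq u (h ▸ huv.symm)
    clear Np Nq N1 N2 cr b1 b2 c1 c2
    grind
  · tauto

lemma case_bb (hG : IsFullerene G F) {A : Finset V} {x₁ z₁ x₂ z₂ : V} (hA : Cut2 G A x₁ z₁ x₂ z₂)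
    (hx : x₁ ≠ x₂) {f g} (hf : f ∈ F) (hg : g ∈ F) (hfg : f ≠ g)
    (hf1 : s(x₁,z₁) ∈ f) (hf2 : s(x₂,z₂) ∈ f)
    (hg1 : s(x₁,z₁) ∈ g) (hg2 : s(x₂,z₂) ∈ g)
    {p q : V} (pA : p ∈ A) (qA : q ∈ A) (p1 : p ≠ x₁) (p2 : p ≠ x₂)
    (q1 : q ≠ x₁) (q2 : q ≠ x₂) (f1 : s(x₁,p) ∈ f)
    (f2 : s(p,x₂) ∈ f) (g1 : s(x₁,q) ∈ g) (g2 : s(q,x₂) ∈ g) :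
    ∃ B, B.card < A.card ∧ Bad G F B := by
  obtain ⟨m1, m2, n1, n2, cr⟩ := hA
  have hpz : p ≠ z₁ := by grind
  have hqz : q ≠ z₁ := by grind
  have hpz2 : p ≠ z₂ := by grind
  have hqz2 : q ≠ z₂ := by grind
  have hpq : p ≠ q := by
    rintro rfl
    exact hfg (uniq hG hf hg hpz f1 hf1 g1 hg1)
  have a1 := face_adj hG hf hf1
  have a2 := face_adj hG hf hf2
  have a3 := face_adj hG hf f1
  have a4 := face_adj hG hf f2
  have a5 := face_adj hG hg g1
  have a6 := face_adj hG hg g2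
  have N1 := nbr3 hG a1 a3 a5 hpz.symm hqz.symm hpq
  have N2 := nbr3 hG a2 a4.symm a6.symm hpz2.symm hqz2.symm hpq
  obtain ⟨t, t1, t2, ht, Np⟩ := third hG a3.symm a4 hx
  obtain ⟨r, r1, r2, hr, Nq⟩ := third hG a5.symm a6 hx
  -- faces at x₁ and x₂ not containing the cut edges
  obtain ⟨h, hh, h1, h2⟩ := exists_face hG hpq a3 a5
  obtain ⟨k, hk, k1, k2⟩ := exists_face hG hpq a4.symm a6.symm
  have hnf : h ≠ f := by
    rintro rfl
    exact no_three hG hh hpq hpz.symm hqz.symm h1 h2 hf1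
  have hng : h ≠ g := by
    rintro rfl
    exact no_three hG hh hpq hpz.symm hqz.symm h1 h2 hg1
  have knf : k ≠ f := by
    rintro rfl
    exact no_three hG hk hpq hpz2.symm hqz2.symm k1 k2 hf2
  have kng : k ≠ g := by
    rintro rfl
    exact no_three hG hk hpq hpz2.symm hqz2.symm k1 k2 hg2
  have h3 : s(p,t) ∈ h := turn hG hf hh hnf hx Np (swp f1) f2 (swp h1)
  have h4 : s(q,r) ∈ h := turn hG hg hh hng hx Nq (swp g1) g2 (swp h2)
  have k3 : s(p,t) ∈ k := turn hG hf hk knf hx.symm (fun e he => by have := Np e he; tauto)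
    f2 (swp f1) (swp k1)
  have k4 : s(q,r) ∈ k := turn hG hg hk kng hx.symm (fun e he => by have := Nq e he; tauto)
    g2 (swp g1) (swp k2)
  have tq : t ≠ q := by
    rintro rfl
    exact tri hG hh h1 h3 (swp h2)
  have rp : r ≠ p := by
    rintro rfl
    exact tri hG hh h2 h4 (swp h1)
  have tA : t ∈ A := by
    by_contra h
    rcases cr _ _ pA h ht with h | h <;> tauto
  have rA : r ∈ A := by
    by_contra h
    rcases cr _ _ qA h hr with h | h <;> tauto
  have tp := ht.ne'
  have rq := hr.ne'
  have hhk : h ≠ k := by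
    rintro rfl
    exact no_three hG hh hx t1 t2 (swp h1) (swp k1) h3
  have c1 : ({s(x₁,p), s(x₁,q), s(p,t), s(q,r)} : Finset (Sym2 V)).card = 4 := by
    rw [Finset.card_insert_of_notMem,
      Finset.card_eq_three.2 ⟨_, _, _, ?_, ?_, ?_, rfl⟩]
    all_goals simp; grind
  have c2 : ({s(x₂,p), s(x₂,q), s(p,t), s(q,r)} : Finset (Sym2 V)).card = 4 := by
    rw [Finset.card_insert_of_notMem,
      Finset.card_eq_three.2 ⟨_, _, _, ?_, ?_, ?_, rfl⟩]
    all_goals simp; grind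
  have b1 : (h ∩ (A \ {x₁, x₂, p, q}).sym2).card ≤ 2 := by
    refine inner_le (size_le hG hh) (S := {s(x₁,p), s(x₁,q), s(p,t), s(q,r)}) ?_ ?_ (by rw [c1])
    · intro e; simp; rintro (rfl | rfl | rfl | rfl) <;> assumption
    · intro e; simp only [Finset.mem_insert, Finset.mem_singleton]
      rintro (rfl | rfl | rfl | rfl) <;> simp
  have b2 : (k ∩ (A \ {x₁, x₂, p, q}).sym2).card ≤ 2 := by
    refine inner_le (size_le hG hk) (S := {s(x₂,p), s(x₂,q), s(p,t), s(q,r)}) ?_ ?_ (by rw [c2])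
    · intro e; simp; rintro (rfl | rfl | rfl | rfl) <;> assumption
    · intro e; simp only [Finset.mem_insert, Finset.mem_singleton]
      rintro (rfl | rfl | rfl | rfl) <;> simp
  refine ⟨A \ {x₁, x₂, p, q}, Finset.card_lt_card ⟨Finset.sdiff_subset, fun hs => ?_⟩,
    t, p, r, q, ⟨?_, ?_, ?_, ?_, ?_⟩, ?_, h, k, hh, hk, hhk, swp h3, swp h4, swp k3, swp k4, by omega⟩
  · have := hs m1
    simp at this
  · simp; tauto
  · simp; tauto
  · simp
  · simp
  · intro u v hu hv huv
    simp only [Finset.mem_sdiff, Finset.mem_insert, Finset.mem_singleton] at hu hv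
    have := cr u v hu.1
    have := fun h : v = x₁ => N1 u (h ▸ huv.symm)
    have := fun h : v = x₂ => N2 u (h ▸ huv.symm)
    have := fun h : v = p => Np u (h ▸ huv.symm)
    have := fun h : v = q => Nq u (h ▸ huv.symm)
    clear Np Nq N1 N2 cr b1 b2 c1 c2
    grind
  · tauto

lemma bad_step (hG : IsFullerene G F) {A : Finset V} (hA : Bad G F A) :
    ∃ B, B.card < A.card ∧ Bad G F B := by
  obtain ⟨x₁, z₁, x₂, z₂, hA, hne, f, g, hf, hg, hfg, hf1, hf2, hg1, hg2, hc⟩ := hA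
  have hx : x₁ ≠ x₂ := by
    rintro rfl
    exact hfg (uniq hG hf hg (fun h => hne ⟨rfl, h⟩) hf1 hf2 hg1 hg2)
  rcases path_type hG hA hx hf hf1 hf2 with ⟨F1, F2⟩ | ⟨p, pA, p1, p2, F1, F2, F3⟩ |
    ⟨p, q, pA, qA, p1, p2, q1, q2, hpq, F1, F2, F3, F4⟩ | F1 <;>
  rcases path_type hG hA hx hg hg1 hg2 with ⟨G1, G2⟩ | ⟨p', pA', p1', p2', G1, G2, G3⟩ |
    ⟨p', q', pA', qA', p1', p2', q1', q2', hpq', G1, G2, G3, G4⟩ | G1 <;> try omega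
  · refine absurd (uniq hG hf hg ?_ hf1 F1 hg1 G1) hfg
    rintro rfl
    exact hA.n1 hA.m2
  · exact (case_ab hG hA hx hf hg hf1 hf2 F1 pA' p1' p2' G1 G2).elim
  · exact case_ac hG hA hx hf hg hf1 hf2 hg1 hg2 F1 pA' qA' p1' p2' q1' q2' hpq' G1 G2 G3
  · exact (case_ab hG hA hx hg hf hg1 hg2 G1 pA p1 p2 F1 F2).elim
  · exact case_bb hG hA hx hf hg hfg hf1 hf2 hg1 hg2 pA pA' p1 p2 p1' p2' F1 F2 G1 G2
  · exact case_ac hG hA hx hg hf hg1 hg2 hf1 hf2 G1 pA qA p1 p2 q1 q2 hpq F1 F2 F3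

lemma not_bad (hG : IsFullerene G F) (n : ℕ) : ∀ A : Finset V, A.card = n → ¬ Bad G F A := by
  induction n using Nat.strong_induction_on with
  | _ n ih =>
    intro A hA hb
    obtain ⟨B, hB, hb'⟩ := bad_step hG hb
    exact ih _ (hA ▸ hB) B rfl hb'

/-- number of edges (as darts) between two vertex sets -/
def ec (G : SimpleGraph V) [DecidableRel G.Adj] (X Y : Finset V) : ℕ :=
  ∑ x ∈ X, ∑ y ∈ Y, if G.Adj x y then 1 else 0

lemma ec_eq (X Y : Finset V) : ec G X Y = ((X ×ˢ Y).filter (fun d => G.Adj d.1 d.2)).card := by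
  rw [ec, ← Finset.sum_product', Finset.card_filter]

lemma ec_comm (X Y : Finset V) : ec G X Y = ec G Y X := by
  rw [ec, ec, Finset.sum_comm]
  simp only [G.adj_comm]

lemma ec_union (X Y Z : Finset V) (h : Disjoint Y Z) : ec G X (Y ∪ Z) = ec G X Y + ec G X Z := by
  simp only [ec, Finset.sum_union h, Finset.sum_add_distrib]

lemma cut_ge (hG : IsFullerene G F) (A : Finset V) (h1 : A.Nonempty) (h2 : Aᶜ.Nonempty) :
    3 ≤ ec G A Aᶜ := by
  by_contra hlt
  rw [ec_eq] at hlt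
  set D := (A ×ˢ Aᶜ).filter (fun d => G.Adj d.1 d.2) with hD
  have mD : ∀ u v, (u, v) ∈ D ↔ (u ∈ A ∧ v ∉ A) ∧ G.Adj u v := by
    intro u v; simp [hD]
  obtain ⟨a, ha⟩ := h1
  obtain ⟨b, hb⟩ := h2
  obtain ⟨w⟩ := hG.connected.preconnected a b
  obtain ⟨d, -, hd1, hd2⟩ := w.exists_boundary_dart (A : Set V) (by simpa using ha) (by simpa using hb)
  obtain ⟨x, z, hx, hz, hxz⟩ : ∃ x z, x ∈ A ∧ z ∉ A ∧ G.Adj x z :=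
    ⟨d.fst, d.snd, by simpa using hd1, by simpa using hd2, d.adj⟩
  obtain ⟨f, g, hf, hg, hfg, hfx, hgx, -⟩ := two_faces hG hxz
  obtain ⟨x', z', hx', hz', hfx', hn⟩ := cut hG hf (A : Set V) (by simpa using hx) (by simpa using hz) hfx
  simp only [Finset.mem_coe] at hx' hz'
  have hxz' := face_adj hG hf hfx'
  have hDeq : D = {(x,z), (x',z')} := by
    symm
    apply Finset.eq_of_subset_of_card_le
    · intro e; simp only [Finset.mem_insert, Finset.mem_singleton]
      rintro (rfl | rfl) <;> rw [mD] <;> tauto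
    · rw [Finset.card_pair (by simp; tauto)]; omega
  have cr : ∀ u v, u ∈ A → v ∉ A → G.Adj u v → (u = x ∧ v = z) ∨ (u = x' ∧ v = z') := by
    intro u v hu hv huv
    have := (mD u v).2 ⟨⟨hu, hv⟩, huv⟩
    rw [hDeq] at this
    simpa using this
  have hgx' : s(x',z') ∈ g := by
    obtain ⟨u, v, hu, hv, huv, hn'⟩ := cut hG hg (A : Set V) (by simpa using hx) (by simpa using hz) hgx
    simp only [Finset.mem_coe] at hu hv
    rcases cr u v hu hv (face_adj hG hg huv) with h | ⟨rfl, rfl⟩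
    · exact absurd h hn'
    · exact huv
  have C1 : Cut2 G A x z x' z' := ⟨hx, hx', hz, hz', cr⟩
  have C2 : Cut2 G Aᶜ z x z' x' := ⟨by simpa, by simpa, by simpa, by simpa, by
    intro u v hu hv huv
    have := cr v u (by simpa using hv) (by simpa using hu) huv.symm
    tauto⟩
  have sz : ∀ k ∈ F, s(x,z) ∈ k → s(x',z') ∈ k → (k ∩ A.sym2).card + (k ∩ Aᶜ.sym2).card ≤ 4 := by
    intro k hk k1 k2
    have d1 : Disjoint (k ∩ A.sym2) (k ∩ Aᶜ.sym2) := by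
      rw [Finset.disjoint_left]
      intro e
      induction e with | _ u v =>
      simp; tauto
    rw [← Finset.card_union_of_disjoint d1, ← Finset.inter_union_distrib_left]
    have d2 : Disjoint ({s(x,z), s(x',z')} : Finset (Sym2 V)) (k ∩ (A.sym2 ∪ Aᶜ.sym2)) := by
      rw [Finset.disjoint_left]
      intro e
      simp only [Finset.mem_insert, Finset.mem_singleton]
      rintro (rfl | rfl) <;> simp <;> tauto
    have hs : ({s(x,z), s(x',z')} : Finset (Sym2 V)) ∪ (k ∩ (A.sym2 ∪ Aᶜ.sym2)) ⊆ k := by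
      apply Finset.union_subset _ Finset.inter_subset_left
      intro e
      simp only [Finset.mem_insert, Finset.mem_singleton]
      rintro (rfl | rfl) <;> assumption
    have := Finset.card_le_card hs
    rw [Finset.card_union_of_disjoint d2, Finset.card_pair] at this
    · have := size_le hG hk
      omega
    · simp only [ne_eq, Sym2.eq_iff, not_or]
      constructor
      · rintro ⟨rfl, rfl⟩; exact hn ⟨rfl, rfl⟩
      · rintro ⟨rfl, rfl⟩; exact hz' hx
  have s1 := sz f hf hfx hfx'
  have s2 := sz g hg hgx hgx'
  by_cases hle : (f ∩ A.sym2).card + (g ∩ A.sym2).card ≤ 4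
  · exact not_bad hG _ A rfl ⟨x, z, x', z', C1, by grind, f, g, hf, hg, hfg, hfx, hfx', hgx, hgx', hle⟩
  · exact not_bad hG _ Aᶜ rfl ⟨z, x, z', x', C2, by grind, f, g, hf, hg, hfg, swp hfx, swp hfx',
      swp hgx, swp hgx', by omega⟩

lemma ec_univ (hG : IsFullerene G F) (u : V) : ec G {u} Finset.univ = 3 := by
  rw [← hG.cubic u, ← SimpleGraph.card_neighborFinset_eq_degree, ec]
  rw [Finset.sum_singleton, ← Finset.card_filter]
  congr 1
  ext t; simp

lemma no_sep (hG : IsFullerene G F) (A B s : Finset V) (hA : A.Nonempty) (hB : B.Nonempty)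
    (hAB : Disjoint A B) (hAs : Disjoint A s) (hBs : Disjoint B s) (hu : ∀ v, v ∈ A ∨ v ∈ B ∨ v ∈ s)
    (h0 : ec G A B = 0) (hs : s.card ≤ 2) : False := by
  rw [Finset.disjoint_left] at hAB hAs hBs
  have cA : Aᶜ = B ∪ s := by
    ext v; have := hu v; have := @hAB v; have := @hAs v; simp; tauto
  have cB : Bᶜ = A ∪ s := by
    ext v; have := hu v; have := @hAB v; have := @hBs v; simp; tauto
  have dAs : Disjoint A s := Finset.disjoint_left.2 hAs
  have dBs : Disjoint B s := Finset.disjoint_left.2 hBs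
  have dAB : Disjoint A B := Finset.disjoint_left.2 hAB
  have gA := cut_ge hG A hA (by rw [cA]; exact hB.mono Finset.subset_union_left)
  have gB := cut_ge hG B hB (by rw [cB]; exact hA.mono Finset.subset_union_left)
  rw [cA, ec_union _ _ _ dBs, h0] at gA
  rw [cB, ec_union _ _ _ dAs, ec_comm B A, h0] at gB
  have U : (Finset.univ : Finset V) = A ∪ (B ∪ s) := by
    ext v; have := hu v; simp; tauto
  have deg : ∀ u, ec G A {u} + (ec G B {u} + ec G {u} s) = 3 := by
    intro u
    have := ec_univ hG u
    rw [U, ec_union _ _ _ (by rw [Finset.disjoint_union_right]; exact ⟨dAB, dAs⟩),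
      ec_union _ _ _ dBs] at this
    rwa [ec_comm A, ec_comm B]
  have h3 : s.card = 0 ∨ s.card = 1 ∨ s.card = 2 := by omega
  rcases h3 with h | h | h
  · rw [Finset.card_eq_zero] at h
    subst h
    simp [ec] at gA
  · obtain ⟨u, rfl⟩ := Finset.card_eq_one.1 h
    have := deg u
    omega
  · obtain ⟨u, v, huv, rfl⟩ := Finset.card_eq_two.1 h
    have duv : Disjoint ({u} : Finset V) {v} := by simpa using huv
    have e1 : ({u, v} : Finset V) = {u} ∪ {v} := rfl
    have du := deg u
    have dv := deg v
    rw [e1, ec_union _ _ _ duv] at gA gB du dv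
    have uA : u ∉ A := fun h => hAs h (by simp)
    have vA : v ∉ A := fun h => hAs h (by simp)
    have uB : u ∉ B := fun h => hBs h (by simp)
    have vB : v ∉ B := fun h => hBs h (by simp)
    have key : ∀ p q : V, p ≠ q → p ∉ A → q ∉ A → p ∉ B → q ∉ B →
        ({u, v} : Finset V) = {p, q} → 3 ≤ ec G A {q} + (ec G B {p} + ec G {p} {q}) := by
      intro p q hpq pA qA pB qB he
      rw [he] at hu
      have c : (A ∪ {p})ᶜ = B ∪ {q} := by
        ext t
        have := hu t; have := @hAB t
        simp only [Finset.mem_insert, Finset.mem_singleton] at this hu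
        simp only [Finset.mem_compl, Finset.mem_union, Finset.mem_singleton]
        have := hu t
        grind
      have := cut_ge hG (A ∪ {p}) (hA.mono Finset.subset_union_left)
        (by rw [c]; exact hB.mono Finset.subset_union_left)
      rw [c, ec_union _ _ _ (by simpa using qB), ec_comm _ B, ec_comm _ {q},
        ec_union _ _ _ (by simpa using pA), ec_union _ _ _ (by simpa using pA), ec_comm B A, h0,
        ec_comm {q} A, ec_comm {q} {p}] at this
      omega
    have k1 := key u v huv uA vA uB vB rfl
    have k2 := key v u huv.symm vA uA vB uB (Finset.pair_comm u v)
    rw [ec_comm {v} {u}] at k2 dv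
    omega

end Ful

/-- Every fullerene graph is `3`-connected: it has more than `3` vertices and
removing any set of at most `2` vertices leaves it connected. -/
theorem fullerene_three_connected {V : Type*} [Fintype V] [DecidableEq V]
    (G : SimpleGraph V) [DecidableRel G.Adj] (F : Finset (Finset (Sym2 V)))
    (hG : IsFullerene G F) :
    3 < Fintype.card V ∧
      ∀ s : Finset V, s.card ≤ 2 → (G.induce ((↑s : Set V)ᶜ)).Connected := by
  classical
  have hcard : 3 < Fintype.card V := by
    obtain ⟨v⟩ := hG.connected.nonempty
    rw [← hG.cubic v]
    exact G.degree_lt_card_verts v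
  refine ⟨hcard, fun s hs => ?_⟩
  have hne : ∃ v, v ∉ s := by
    by_contra! h
    have : s = Finset.univ := Finset.eq_univ_iff_forall.2 h
    rw [this, Finset.card_univ] at hs
    omega
  obtain ⟨v₀, hv₀⟩ := hne
  have : Nonempty ↑((s : Set V)ᶜ) := ⟨⟨v₀, by simpa using hv₀⟩⟩
  refine SimpleGraph.Connected.mk ?_
  by_contra hpre
  simp only [SimpleGraph.Preconnected, not_forall] at hpre
  obtain ⟨a, b, hab⟩ := hpre
  set A : Finset V := Finset.univ.filter
    (fun v => ∃ h : v ∈ ((s : Set V)ᶜ), (G.induce ((s : Set V)ᶜ)).Reachable a ⟨v, h⟩) with hAdef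
  have mA : ∀ v, v ∈ A ↔ ∃ h : v ∈ ((s : Set V)ᶜ), (G.induce ((s : Set V)ᶜ)).Reachable a ⟨v, h⟩ := by
    intro v; simp [hAdef]
  have hAs : ∀ v ∈ A, v ∉ s := by
    intro v hv
    obtain ⟨h, -⟩ := (mA v).1 hv
    simpa using h
  refine Ful.no_sep hG A (A ∪ s)ᶜ s ⟨a, (mA _).2 ⟨a.2, SimpleGraph.Reachable.refl _⟩⟩ ⟨b, ?_⟩ ?_ ?_ ?_ ?_ ?_ hs
  · have hb : (b : V) ∉ s := fun h => b.2 (Finset.mem_coe.2 h)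
    simp only [Finset.mem_compl, Finset.mem_union, not_or, mA, not_exists]
    exact ⟨fun _ h => hab h, hb⟩
  · rw [Finset.disjoint_left]; intro v hv; simp [hv]
  · rw [Finset.disjoint_left]; exact hAs
  · rw [Finset.disjoint_left]; intro v hv; simp at hv; exact hv.2
  · intro v; simp; tauto
  · rw [Ful.ec]
    refine Finset.sum_eq_zero fun x hx => Finset.sum_eq_zero fun y hy => ?_
    rw [if_neg]
    intro hxy
    simp only [Finset.mem_compl, Finset.mem_union, not_or] at hy
    obtain ⟨h, hr⟩ := (mA x).1 hx
    have hy' : y ∈ ((s : Set V)ᶜ) := by simpa using hy.2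
    refine hy.1 ((mA y).2 ⟨hy', hr.trans (SimpleGraph.Adj.reachable ?_)⟩)
    simpa using hxy
end

section
/- The graph consisting of a 6-cycle a b c d e f together with a vertex x adjacent to all six cycle vertices admits a proper list coloring whenever the lists satisfy: |L(a)|, |L(b)|, |L(c)|, |L(d)|, |L(e)| ≥ 2, |L(f)| ≥ 3, and L(x) = {1,2,3,4,5}, with all lists subsets of {1,2,3,4,5}. -/
/-- The wheel `W₆`: a 6-cycle `0 1 2 3 4 5` (representing `a b c d e f`)
together with a hub vertex `6` (representing `x`) adjacent to all six cycle
vertices. -/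
def wheel6 : SimpleGraph (Fin 7) :=
  SimpleGraph.fromRel (fun u v =>
    v = 6 ∨ (u.val < 6 ∧ v.val < 6 ∧ v.val = (u.val + 1) % 6))

/-! Partial colorings of a path starting at vertex `f` are recorded by bitmasks: bit
`25 * q + 5 * p + x` says that hub color `x`, color `p` at `f` and color `q` at the current end
of the path are compatible with the lists seen so far. -/

/-- Masks of the ten two-element lists `{u, v}`: all triples with `q` in the list and `x ≠ q`. -/
def pairMasks : List ℕ :=
  [1053261204257758,
   32904229996791835098078,
   940514933430123980206789065694,
   20581594160064535986141495693065288670,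
   32904231050052974411776,
   940514933430125033467928379392,
   20581594160064535986142548954204602368,
   940514966334353976998559219712,
   20581594160064568890371492484835442688,
   20581595100579469416265475899789410304]

def blk : Fin 5 → ℕ := ![32472030, 1053261171785728, 32904229996791802626048, 940514933430123980206756593664, 20581594160064535986141495693032816640]

/-- The start mask: the path consists of `f` alone, with list `{0, 1, 2}`. -/
def startMask : ℕ := 31128880655523381278

/-- Extend a path by a new vertex with an unrestricted list. -/
def extMask (R : ℕ) : ℕ :=
  (((R >>> 25) ||| (R >>> 50)) ||| ((R >>> 75) ||| (R >>> 100))) |||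
  (((R <<< 25) ||| (R <<< 50)) ||| ((R <<< 75) ||| (R <<< 100)))

/-- Continuation call that makes the kernel evaluate `n` first. -/
def forceNat (n : ℕ) (k : ℕ → Bool) : Bool :=
  Nat.rec (k 0) (fun m _ => k (Nat.succ m)) n

theorem forceNat_eq (n : ℕ) (k : ℕ → Bool) : forceNat n k = k n := by
  cases n <;> rfl

/-- `allStep R k`: `k` holds for every extension of `R` by a two-element list. -/
def allStep (R : ℕ) (k : ℕ → Bool) : Bool :=
  forceNat (extMask R) fun e => pairMasks.all fun m => forceNat (Nat.land e m) k

theorem allStep_spec {R : ℕ} {k : ℕ → Bool} (h : allStep R k = true) {m : ℕ}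
    (hm : m ∈ pairMasks) : k (extMask R &&& m) = true := by
  unfold allStep at h
  rw [forceNat_eq, List.all_eq_true] at h
  have := h m hm
  rwa [forceNat_eq] at this

/-- Evaluate all elements `g m` before passing on the list. -/
def forceList (g : ℕ → ℕ) : List ℕ → (List ℕ → Bool) → Bool
  | [], k => k []
  | m :: l, k => forceNat (g m) fun v => forceList g l fun r => k (v :: r)

theorem forceList_eq (g : ℕ → ℕ) (l : List ℕ) (k : List ℕ → Bool) :
    forceList g l k = k (l.map g) := by
  induction l generalizing k with
  | nil => rfl
  | cons m l ih => simp [forceList, forceNat_eq, ih]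

/-- The whole computation: for all lists at `a, b, c` and at `e, d` the two paths can be glued. -/
def mainCheck : Bool :=
  pairMasks.all fun m₁ => forceNat (extMask (extMask startMask &&& m₁)) fun r =>
    forceList (fun m => extMask (r &&& m)) pairMasks fun B =>
      allStep startMask fun R₁ => allStep R₁ fun R₂ => allStep R₂ fun R₃ =>
        B.all fun b => not (Nat.beq (Nat.land R₃ b) 0)

set_option maxRecDepth 100000 in
theorem mainCheck_true : mainCheck = true := by decide +kernel

theorem mainCheck_spec {m₁ m₂ n₁ n₂ n₃ : ℕ} (h₁ : m₁ ∈ pairMasks) (h₂ : m₂ ∈ pairMasks)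
    (k₁ : n₁ ∈ pairMasks) (k₂ : n₂ ∈ pairMasks) (k₃ : n₃ ∈ pairMasks) :
    (extMask (extMask (extMask startMask &&& n₁) &&& n₂) &&& n₃) &&&
      extMask (extMask (extMask startMask &&& m₁) &&& m₂) ≠ 0 := by
  have h := mainCheck_true
  unfold mainCheck at h
  rw [List.all_eq_true] at h
  have h := h m₁ h₁
  rw [forceNat_eq, forceList_eq] at h
  have h := allStep_spec (allStep_spec (allStep_spec h k₁) k₂) k₃
  rw [List.all_eq_true] at h
  have h := h _ (List.mem_map_of_mem h₂)
  intro h0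
  have h : (!Nat.beq ((extMask (extMask (extMask startMask &&& n₁) &&& n₂) &&& n₃) &&&
      extMask (extMask (extMask startMask &&& m₁) &&& m₂)) 0) = true := h
  rw [h0] at h
  exact absurd h (by decide)

theorem blk_spec (u : Fin 5) (i : ℕ) (h : (blk u).testBit i = true) :
    i / 25 = u.val ∧ i % 5 ≠ u.val := by
  have hi : i < 125 := by
    by_contra hc
    have hlt : blk u < 2 ^ i :=
      lt_of_lt_of_le (b := 2 ^ 125) (by clear h; revert u; decide)
        (Nat.pow_le_pow_right (by norm_num) (by omega))
    rw [Nat.testBit_lt_two_pow hlt] at h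
    cases h
  have key : ∀ u : Fin 5, ∀ i : Fin 125, (blk u).testBit i.val = true →
      i.val / 25 = u.val ∧ i.val % 5 ≠ u.val := by decide +kernel
  exact key u ⟨i, hi⟩ h

theorem start_spec (i : ℕ) (h : startMask.testBit i = true) :
    i / 25 = i / 5 % 5 ∧ i / 25 < 3 ∧ i % 5 ≠ i / 25 := by
  have hi : i < 125 := by
    by_contra hc
    have hlt : startMask < 2 ^ i :=
      lt_of_lt_of_le (b := 2 ^ 125) (by decide)
        (Nat.pow_le_pow_right (by norm_num) (by omega))
    rw [Nat.testBit_lt_two_pow hlt] at h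
    cases h
  have key : ∀ i : Fin 125, startMask.testBit i.val = true →
      i.val / 25 = i.val / 5 % 5 ∧ i.val / 25 < 3 ∧ i.val % 5 ≠ i.val / 25 := by decide +kernel
  exact key ⟨i, hi⟩ h

theorem ext_spec (R i : ℕ) (h : (extMask R).testBit i = true) :
    ∃ j, R.testBit j = true ∧ j / 5 % 5 = i / 5 % 5 ∧ j % 5 = i % 5 ∧ j / 25 ≠ i / 25 := by
  simp only [extMask, Nat.testBit_or, Nat.testBit_shiftRight, Nat.testBit_shiftLeft,
    Bool.or_eq_true, Bool.and_eq_true, decide_eq_true_eq] at h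
  rcases h with ((h | h) | (h | h)) | ((⟨g, h⟩ | ⟨g, h⟩) | (⟨g, h⟩ | ⟨g, h⟩)) <;>
    exact ⟨_, h, by omega, by omega, by omega⟩

/-- Every list with at least two colors contains one of the ten pairs. -/
theorem exists_mask (A : Finset (Fin 5)) (hA : 2 ≤ A.card) :
    ∃ m ∈ pairMasks, ∀ i, m.testBit i = true →
      ∃ q ∈ A, i / 25 = q.val ∧ i % 5 ≠ q.val := by
  obtain ⟨u, hu, v, hv, huv⟩ := Finset.one_lt_card.mp hA
  have key : ∀ u v : Fin 5, u ≠ v → blk u ||| blk v ∈ pairMasks := by decide +kernel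
  refine ⟨_, key u v huv, fun i hi => ?_⟩
  rw [Nat.testBit_or, Bool.or_eq_true] at hi
  rcases hi with hi | hi
  · exact ⟨u, hu, blk_spec u i hi⟩
  · exact ⟨v, hv, blk_spec v i hi⟩

theorem step_spec {R m : ℕ} {A : Finset (Fin 5)}
    (hm : ∀ i, m.testBit i = true → ∃ q ∈ A, i / 25 = q.val ∧ i % 5 ≠ q.val)
    {i : ℕ} (h : (extMask R &&& m).testBit i = true) :
    ∃ q ∈ A, i / 25 = q.val ∧ i % 5 ≠ q.val ∧
      ∃ j, R.testBit j = true ∧ j / 5 % 5 = i / 5 % 5 ∧ j % 5 = i % 5 ∧ j / 25 ≠ i / 25 := by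
  rw [Nat.testBit_and, Bool.and_eq_true] at h
  obtain ⟨q, hq, h1, h2⟩ := hm i h.2
  exact ⟨q, hq, h1, h2, ext_spec R i h.1⟩

/-- The case where the list of `f` contains `0, 1, 2`. -/
theorem core (A B C D E : Finset (Fin 5)) (hA : 2 ≤ A.card) (hB : 2 ≤ B.card)
    (hC : 2 ≤ C.card) (hD : 2 ≤ D.card) (hE : 2 ≤ E.card) :
    ∃ a ∈ A, ∃ b ∈ B, ∃ c ∈ C, ∃ d ∈ D, ∃ e ∈ E, ∃ f : Fin 5, ∃ x : Fin 5, f.val < 3 ∧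
      (a ≠ b ∧ b ≠ c ∧ c ≠ d ∧ d ≠ e ∧ e ≠ f ∧ f ≠ a) ∧
      (a ≠ x ∧ b ≠ x ∧ c ≠ x ∧ d ≠ x ∧ e ≠ x ∧ f ≠ x) := by
  obtain ⟨mA, hmA, sA⟩ := exists_mask A hA
  obtain ⟨mB, hmB, sB⟩ := exists_mask B hB
  obtain ⟨mC, hmC, sC⟩ := exists_mask C hC
  obtain ⟨mD, hmD, sD⟩ := exists_mask D hD
  obtain ⟨mE, hmE, sE⟩ := exists_mask E hE
  obtain ⟨i, hi⟩ := Nat.exists_testBit_of_ne_zero (mainCheck_spec hmE hmD hmA hmB hmC)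
  rw [Nat.testBit_and, Bool.and_eq_true] at hi
  obtain ⟨c, hc, c1, c2, j, hj, j1, j2, j3⟩ := step_spec sC hi.1
  obtain ⟨b, hb, b1, b2, k, hk, k1, k2, k3⟩ := step_spec sB hj
  obtain ⟨a, ha, a1, a2, l, hl, l1, l2, l3⟩ := step_spec sA hk
  obtain ⟨f1, f2, f3⟩ := start_spec l hl
  obtain ⟨o, ho, o1, o2, o3⟩ := ext_spec _ _ hi.2
  obtain ⟨d, hd, d1, d2, r, hr, r1, r2, r3⟩ := step_spec sD ho
  obtain ⟨e, he, e1, e2, s, hs, s1, s2, s3⟩ := step_spec sE hr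
  obtain ⟨g1, g2, g3⟩ := start_spec s hs
  have hx5 : i % 5 < 5 := Nat.mod_lt _ (by norm_num)
  clear hi hj hk hl ho hr hs sA sB sC sD sE
  generalize i / 25 = qi, i / 5 % 5 = pi, i % 5 = xi at *
  generalize j / 25 = qj, j / 5 % 5 = pj, j % 5 = xj at *
  generalize k / 25 = qk, k / 5 % 5 = pk, k % 5 = xk at *
  generalize l / 25 = ql, l / 5 % 5 = pl, l % 5 = xl at *
  generalize o / 25 = qo, o / 5 % 5 = po, o % 5 = xo at *
  generalize r / 25 = qr, r / 5 % 5 = pr, r % 5 = xr at *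
  generalize s / 25 = qs, s / 5 % 5 = ps, s % 5 = xs at *
  refine ⟨a, ha, b, hb, c, hc, d, hd, e, he, ⟨ql, by omega⟩, ⟨xi, by omega⟩, f2, ?_, ?_⟩
  · simp only [ne_eq, Fin.ext_iff]
    refine ⟨?_, ?_, ?_, ?_, ?_, ?_⟩ <;> grind only
  · simp only [ne_eq, Fin.ext_iff]
    refine ⟨?_, ?_, ?_, ?_, ?_, ?_⟩ <;> grind only

/-- Rename the colors so that three given ones become `0, 1, 2`. -/
theorem exists_perm (F : Finset (Fin 5)) (hF : 3 ≤ F.card) :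
    ∃ σ : Equiv.Perm (Fin 5), ∀ f : Fin 5, f.val < 3 → σ f ∈ F := by
  obtain ⟨T, hT, hc⟩ := Finset.exists_subset_card_eq hF
  have e : {f : Fin 5 // f.val < 3} ≃ {f : Fin 5 // f ∈ T} :=
    Fintype.equivOfCardEq (by simp [hc]; decide)
  refine ⟨e.extendSubtype, fun f hf => hT ?_⟩
  exact e.extendSubtype_mem f hf

/-- The wheel `W₆` admits a proper list coloring with colors from `{1,…,5}`
(here `Fin 5`) whenever the lists of the five cycle vertices `a,…,e` have size
at least `2`, the list of `f` has size at least `3`, and the hub `x` has all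
five colors available. -/
theorem wheel6_list_colorable (L : Fin 7 → Finset (Fin 5))
    (ha : 2 ≤ (L 0).card) (hb : 2 ≤ (L 1).card) (hc : 2 ≤ (L 2).card)
    (hd : 2 ≤ (L 3).card) (he : 2 ≤ (L 4).card) (hf : 3 ≤ (L 5).card)
    (hx : L 6 = Finset.univ) :
    ∃ φ : Fin 7 → Fin 5, (∀ v, φ v ∈ L v) ∧
      ∀ ⦃u v⦄, wheel6.Adj u v → φ u ≠ φ v := by
  obtain ⟨σ, hσ⟩ := exists_perm (L 5) hf
  obtain ⟨a, ma, b, mb, c, mc, d, md, e, me, f, x, hf3, ⟨h1, h2, h3, h4, h5, h6⟩,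
    ⟨g1, g2, g3, g4, g5, g6⟩⟩ := core ((L 0).map σ.symm.toEmbedding)
      ((L 1).map σ.symm.toEmbedding) ((L 2).map σ.symm.toEmbedding)
      ((L 3).map σ.symm.toEmbedding) ((L 4).map σ.symm.toEmbedding)
      (by simpa using ha) (by simpa using hb) (by simpa using hc) (by simpa using hd)
      (by simpa using he)
  simp only [Finset.mem_map_equiv, Equiv.symm_symm] at ma mb mc md me
  refine ⟨![σ a, σ b, σ c, σ d, σ e, σ f, σ x], ?_, ?_⟩
  · intro v
    fin_cases v
    · exact ma
    · exact mb
    · exact mc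
    · exact md
    · exact me
    · exact hσ f hf3
    · simp [hx]
  · intro u v huv
    rw [wheel6, SimpleGraph.fromRel_adj] at huv
    fin_cases u <;> fin_cases v <;>
      first
      | (exfalso; revert huv; decide)
      | (simp only [ne_eq]
         first
         | exact fun h => h1 (σ.injective h)
         | exact fun h => h2 (σ.injective h)
         | exact fun h => h3 (σ.injective h)
         | exact fun h => h4 (σ.injective h)
         | exact fun h => h5 (σ.injective h)
         | exact fun h => h6 (σ.injective h)
         | exact fun h => g1 (σ.injective h)
         | exact fun h => g2 (σ.injective h)
         | exact fun h => g3 (σ.injective h)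
         | exact fun h => g4 (σ.injective h)
         | exact fun h => g5 (σ.injective h)
         | exact fun h => g6 (σ.injective h)
         | exact fun h => h1 (σ.injective h.symm)
         | exact fun h => h2 (σ.injective h.symm)
         | exact fun h => h3 (σ.injective h.symm)
         | exact fun h => h4 (σ.injective h.symm)
         | exact fun h => h5 (σ.injective h.symm)
         | exact fun h => h6 (σ.injective h.symm)
         | exact fun h => g1 (σ.injective h.symm)
         | exact fun h => g2 (σ.injective h.symm)
         | exact fun h => g3 (σ.injective h.symm)
         | exact fun h => g4 (σ.injective h.symm)
         | exact fun h => g5 (σ.injective h.symm)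
         | exact fun h => g6 (σ.injective h.symm))
end
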